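/- For any prime power q and any genus g ≥ 2, the weighted sum a_{[2]}|_g := Σ_{C ∈ Hyp_g(F_q)} (1/|Aut_{F_q}(C)|) · a_2(C), where a_2(C) = q² + 1 − |C(F_{q²})|, equals (−1)^g − q^{2g}; in particular for q = 2 and g = 5 one has a_{[2]}|_5 = −1025. -/

import Mathlib

open Polynomial

noncomputable section

/-- ψ_n(A)(q) = (cx+d)^n q((ax+b)/(cx+d)) over an arbitrary field. -/
def psiF {F : Type*} [Field F] (n : ℕ) (A : Matrix (Fin 2) (Fin 2) F)
    (q : Polynomial F) : Polynomial F :=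
  ∑ i ∈ Finset.range (n + 1),
    C (q.coeff i) * (C (A 0 0) * X + C (A 0 1)) ^ i * (C (A 1 0) * X + C (A 1 1)) ^ (n - i)

/-- The affine chart y² + Qy = P is nonsingular over the algebraic closure of F. -/
def SmoothChartF {F : Type*} [Field F] (Q P : Polynomial F) : Prop :=
  ∀ x y : AlgebraicClosure F,
    ¬(y ^ 2 + aeval x Q * y - aeval x P = 0 ∧ 2 * y + aeval x Q = 0 ∧
      aeval x (derivative Q) * y - aeval x (derivative P) = 0)

/-- (Q, P) is a standard model of a hyperelliptic curve of genus g over F_q: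
the degree window 2g+1 ≤ max{2 deg Q, deg P} ≤ 2g+2 holds, both charts of the standard
projective model y² + Q(x)y = P(x) (the chart at infinity being obtained by
x ↦ 1/x, y ↦ y/x^{g+1}, i.e. reversing the coefficients of Q and P) are nonsingular over
the algebraic closure of F, and the defining equation stays irreducible over the algebraic
closure (the double cover does not split). -/
def IsHypModel {F : Type*} [Field F] (g : ℕ) (Q P : Polynomial F) : Prop :=
  2 * g + 1 ≤ max (2 * Q.natDegree) P.natDegree ∧
  max (2 * Q.natDegree) P.natDegree ≤ 2 * g + 2 ∧
  SmoothChartF Q P ∧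
  SmoothChartF (reflect (g + 1) Q) (reflect (2 * g + 2) P) ∧
  ¬∃ u : Polynomial (AlgebraicClosure F),
      u ^ 2 + Q.map (algebraMap F (AlgebraicClosure F)) * u =
        P.map (algebraMap F (AlgebraicClosure F))

/-- A standard hyperelliptic equation of genus g over F. -/
def HypEq (F : Type*) [Field F] (g : ℕ) :=
  {QP : Polynomial F × Polynomial F // IsHypModel g QP.1 QP.2}

/-- The datum (A, e, r) transforms the curve y² + Q₁y = P₁ into y² + Q₂y = P₂ via the
change of variables (x, y) ↦ ((ax+b)/(cx+d), (r(x) + e·y)/(cx+d)^{g+1}). -/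
def IsoTriple {F : Type*} [Field F] (g : ℕ) (A : Matrix (Fin 2) (Fin 2) F) (e : F)
    (r : Polynomial F) (Q₁ P₁ Q₂ P₂ : Polynomial F) : Prop :=
  e ≠ 0 ∧ r.natDegree ≤ g + 1 ∧
  C e * Q₁ = 2 * r + psiF (g + 1) A Q₂ ∧
  C (e ^ 2) * P₁ = psiF (2 * g + 2) A P₂ - r ^ 2 - psiF (g + 1) A Q₂ * r

/-- Two standard hyperelliptic equations define F-isomorphic curves. -/
def IsomRel {F : Type*} [Field F] (g : ℕ) (C₁ C₂ : HypEq F g) : Prop :=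
  ∃ (A : Matrix.GeneralLinearGroup (Fin 2) F) (e : F) (r : Polynomial F),
    IsoTriple g (A : Matrix (Fin 2) (Fin 2) F) e r C₁.1.1 C₁.1.2 C₂.1.1 C₂.1.2

/-- Hyp_g(F): the set of F-isomorphism classes of hyperelliptic curves of genus g
over F. -/
def HypClass (F : Type*) [Field F] (g : ℕ) := Quot (IsomRel (F := F) g)

/-- The triples (A, e, r) inducing an automorphism of the curve (Q, P); they map
(q−1)-to-1 onto Aut_F(C), since (A,e,r) and (λA, λ^{g+1}e, λ^{g+1}r) induce the same
automorphism, so that |Aut_F(C)| = |AutTriples| / (q−1). -/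
def AutTriples {F : Type*} [Field F] (g : ℕ) (C : HypEq F g) :=
  {Aer : Matrix.GeneralLinearGroup (Fin 2) F × F × Polynomial F //
    IsoTriple g (Aer.1 : Matrix (Fin 2) (Fin 2) F) Aer.2.1 Aer.2.2
      C.1.1 C.1.2 C.1.1 C.1.2}

/-- The number of L-points of the smooth projective model of y² + Qy = P: affine points
plus the points at infinity (solutions of y² + b_{g+1}y = a_{2g+2} in the chart at
infinity at x = 0). -/
def nPoints {F : Type*} [Field F] (g : ℕ) (L : Type*) [Field L] [Algebra F L]
    (Q P : Polynomial F) : ℕ :=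
  Nat.card {xy : L × L // xy.2 ^ 2 + aeval xy.1 Q * xy.2 = aeval xy.1 P} +
  Nat.card {y : L //
    y ^ 2 + algebraMap F L (Q.coeff (g + 1)) * y = algebraMap F L (P.coeff (2 * g + 2))}

namespace HC

/-! ### Homogeneous evaluation of polynomials of bounded degree -/

section evalForms

variable {F : Type*} [Field F]

/-- Evaluation of a polynomial, seen as a binary form of degree n, at (u, v). -/
def evf {S : Type*} [CommRing S] [Algebra F S] (n : ℕ) (u v : S) (p : F[X]) : S :=
  ∑ i ∈ Finset.range (n + 1), algebraMap F S (p.coeff i) * u ^ i * v ^ (n - i)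

variable {S : Type*} [CommRing S] [Algebra F S]

lemma evf_eq_hom (n : ℕ) (u v : S) (p : F[X]) :
    evf n u v p = MvPolynomial.aeval ![u, v] (p.homogenize n) := by
  rw [evf, Polynomial.homogenize, map_sum, Finset.Nat.sum_antidiagonal_eq_sum_range_succ_mk]
  refine Finset.sum_congr rfl fun i hi => ?_
  rw [MvPolynomial.aeval_monomial]
  simp [Finsupp.prod_fintype, Fin.prod_univ_two, mul_assoc]

lemma evf_add (n : ℕ) (u v : S) (p q : F[X]) :
    evf n u v (p + q) = evf n u v p + evf n u v q := by
  simp [evf_eq_hom]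

lemma evf_neg (n : ℕ) (u v : S) (p : F[X]) : evf n u v (-p) = - evf n u v p := by
  simp [evf_eq_hom]

lemma evf_sub (n : ℕ) (u v : S) (p q : F[X]) :
    evf n u v (p - q) = evf n u v p - evf n u v q := by
  simp [evf_eq_hom]

lemma evf_zero (n : ℕ) (u v : S) : evf n u v (0 : F[X]) = 0 := by
  simp [evf_eq_hom]

lemma evf_C_mul (n : ℕ) (u v : S) (c : F) (p : F[X]) :
    evf n u v (C c * p) = algebraMap F S c * evf n u v p := by
  simp [evf, Finset.mul_sum, mul_assoc]

lemma evf_sum {ι : Type*} (s : Finset ι) (f : ι → F[X]) (n : ℕ) (u v : S) :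
    evf n u v (∑ i ∈ s, f i) = ∑ i ∈ s, evf n u v (f i) := by
  simp [evf_eq_hom]

lemma evf_mul {m n : ℕ} (u v : S) {p q : F[X]} (hp : p.natDegree ≤ m) (hq : q.natDegree ≤ n) :
    evf (m + n) u v (p * q) = evf m u v p * evf n u v q := by
  simp [evf_eq_hom, Polynomial.homogenize_mul p q hp hq]

lemma evf_pow {m : ℕ} (u v : S) {p : F[X]} (hp : p.natDegree ≤ m) (k : ℕ) :
    evf (k * m) u v (p ^ k) = evf m u v p ^ k := by
  induction k with
  | zero => simp [evf]
  | succ k ih =>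
    rw [pow_succ, add_mul, one_mul, evf_mul u v _ hp, ih, pow_succ]
    exact natDegree_pow_le_of_le k hp

lemma evf_one_right {n : ℕ} (x : S) {p : F[X]} (hp : p.natDegree ≤ n) :
    evf n x 1 p = aeval x p := by
  rw [aeval_eq_sum_range' (Nat.lt_succ_of_le hp)]
  simp [evf, Algebra.smul_def]

lemma evf_infty (n : ℕ) (p : F[X]) : evf n (1 : S) 0 p = algebraMap F S (p.coeff n) := by
  rw [evf, Finset.sum_range_succ, Finset.sum_eq_zero]
  · simp
  · intro i hi
    have : n - i ≠ 0 := by have := Finset.mem_range.1 hi; omega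
    simp [this]

lemma evf_smul_pt (n : ℕ) (c u v : S) (p : F[X]) :
    evf n (c * u) (c * v) p = c ^ n * evf n u v p := by
  rw [evf, evf, Finset.mul_sum]
  refine Finset.sum_congr rfl fun i hi => ?_
  have : c ^ n = c ^ i * c ^ (n - i) := by
    rw [← pow_add]; congr 1; have := Finset.mem_range.1 hi; omega
  rw [this, mul_pow, mul_pow]; ring

lemma natDegree_lin_le (a b : F) : (C a * X + C b).natDegree ≤ 1 := natDegree_linear_le

lemma psiF_eq (n : ℕ) (A : Matrix (Fin 2) (Fin 2) F) (q : F[X]) :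
    psiF n A q = evf n (C (A 0 0) * X + C (A 0 1)) (C (A 1 0) * X + C (A 1 1)) q := rfl

lemma natDegree_psiF_le (n : ℕ) (A : Matrix (Fin 2) (Fin 2) F) (q : F[X]) :
    (psiF n A q).natDegree ≤ n := by
  refine natDegree_sum_le_of_forall_le _ _ fun i hi => ?_
  have hi' := Finset.mem_range.1 hi
  have h1 := natDegree_pow_le_of_le i (natDegree_lin_le (A 0 0) (A 0 1))
  have h2 := natDegree_pow_le_of_le (n - i) (natDegree_lin_le (A 1 0) (A 1 1))
  have := natDegree_mul_le_of_le (natDegree_mul_le_of_le (natDegree_C (q.coeff i)).le h1) h2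
  refine this.trans (by omega)

lemma evf_lin (u v : S) (a b : F) :
    evf 1 u v (C a * X + C b) = algebraMap F S a * u + algebraMap F S b * v := by
  simp [evf, Finset.sum_range_succ, add_comm]

lemma evf_psiF (n : ℕ) (A : Matrix (Fin 2) (Fin 2) F) (u v : S) (q : F[X]) :
    evf n u v (psiF n A q) =
      evf n (algebraMap F S (A 0 0) * u + algebraMap F S (A 0 1) * v)
        (algebraMap F S (A 1 0) * u + algebraMap F S (A 1 1) * v) q := by
  rw [psiF, evf_sum, evf]
  refine Finset.sum_congr rfl fun i hi => ?_
  rw [mul_assoc, evf_C_mul, mul_assoc]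
  congr 1
  obtain ⟨k, rfl⟩ := Nat.exists_eq_add_of_le (Nat.lt_succ_iff.1 (Finset.mem_range.1 hi))
  rw [Nat.add_sub_cancel_left]
  have h1 := evf_pow u v (natDegree_lin_le (A 0 0) (A 0 1)) i
  have h2 := evf_pow u v (natDegree_lin_le (A 1 0) (A 1 1)) k
  rw [mul_one] at h1 h2
  rw [evf_mul, h1, h2, evf_lin, evf_lin]
  · simpa using natDegree_pow_le_of_le i (natDegree_lin_le (A 0 0) (A 0 1))
  · simpa using natDegree_pow_le_of_le k (natDegree_lin_le (A 1 0) (A 1 1))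

lemma psiF_psiF (n : ℕ) (A B : Matrix (Fin 2) (Fin 2) F) (q : F[X]) :
    psiF n A (psiF n B q) = psiF n (B * A) q := by
  rw [psiF_eq n A, evf_psiF, psiF_eq]
  congr 1 <;> simp [Matrix.mul_apply, Fin.sum_univ_two, Polynomial.algebraMap_eq] <;> ring

lemma evf_X_one {n : ℕ} {q : F[X]} (hq : q.natDegree ≤ n) : evf n (X : F[X]) 1 q = q := by
  rw [evf_one_right _ hq]; simp

lemma psiF_one {n : ℕ} {q : F[X]} (hq : q.natDegree ≤ n) : psiF n 1 q = q := by
  rw [psiF_eq]; simpa using evf_X_one hq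

lemma psiF_ne_zero {n : ℕ} (A : Matrix.GeneralLinearGroup (Fin 2) F) {q : F[X]}
    (hq : q.natDegree ≤ n) (h0 : q ≠ 0) : psiF n (A : Matrix (Fin 2) (Fin 2) F) q ≠ 0 := by
  intro h
  apply h0
  have h1 := psiF_psiF n ((A⁻¹ : Matrix.GeneralLinearGroup (Fin 2) F) : Matrix (Fin 2) (Fin 2) F)
    (A : Matrix (Fin 2) (Fin 2) F) q
  rw [h, ← Units.val_mul, mul_inv_cancel, Units.val_one, psiF_one hq, psiF_eq, evf_zero] at h1
  exact h1.symm

end evalForms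

/-! ### Pairs (Q, P), translations, scalings, divisibility -/

section pairs

variable {F : Type*} [Field F]

/-- Pairs (Q, P) of forms of degrees n and 2 n. -/
def InV (n : ℕ) (v : F[X] × F[X]) : Prop := v.1.natDegree ≤ n ∧ v.2.natDegree ≤ 2 * n

/-- The substitution y ↦ y + r. -/
def tr (r : F[X]) (v : F[X] × F[X]) : F[X] × F[X] := (v.1 + 2 * r, v.2 - r ^ 2 - v.1 * r)

/-- The substitution y ↦ y / D. -/
def sc (D : F[X]) (v : F[X] × F[X]) : F[X] × F[X] := (D * v.1, D ^ 2 * v.2)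

/-- y² + Q y - P is a perfect square. -/
def IsSq (n : ℕ) (v : F[X] × F[X]) : Prop := ∃ r : F[X], r.natDegree ≤ n ∧ v = tr r (0, 0)

/-- The pair can be partially normalized. -/
def Dv (n : ℕ) (v : F[X] × F[X]) : Prop :=
  ∃ d, 1 ≤ d ∧ d ≤ n ∧ ∃ D r : F[X], ∃ w, D ≠ 0 ∧ D.natDegree ≤ d ∧ r.natDegree ≤ n ∧
    InV (n - d) w ∧ v = tr r (sc D w)

/-- Algebraic form of smoothness. -/
def Sm (n : ℕ) (v : F[X] × F[X]) : Prop := InV n v ∧ ¬ IsSq n v ∧ ¬ Dv n v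

lemma tr_tr (r s : F[X]) (v : F[X] × F[X]) : tr r (tr s v) = tr (r + s) v := by
  ext1 <;> simp only [tr] <;> ring

lemma tr_zero (v : F[X] × F[X]) : tr 0 v = v := by
  ext1 <;> simp [tr]

lemma sc_sc (D E : F[X]) (v : F[X] × F[X]) : sc D (sc E v) = sc (D * E) v := by
  ext1 <;> simp only [sc] <;> ring

lemma sc_one (v : F[X] × F[X]) : sc 1 v = v := by
  ext1 <;> simp [sc]

lemma sc_tr (D r : F[X]) (v : F[X] × F[X]) : sc D (tr r v) = tr (D * r) (sc D v) := by
  ext1 <;> simp only [sc, tr] <;> ring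

lemma sc_zero_pair (D : F[X]) : sc D (0, 0) = (0, 0) := by simp [sc]

lemma sc_inj {D : F[X]} (hD : D ≠ 0) {v w : F[X] × F[X]} (h : sc D v = sc D w) : v = w := by
  have h1 := congrArg Prod.fst h
  have h2 := congrArg Prod.snd h
  simp only [sc] at h1 h2
  exact Prod.ext (mul_left_cancel₀ hD h1) (mul_left_cancel₀ (pow_ne_zero 2 hD) h2)

lemma tr_inj (r : F[X]) {v w : F[X] × F[X]} (h : tr r v = tr r w) : v = w := by
  have := congrArg (tr (-r)) h
  simpa [tr_tr, tr_zero] using this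

lemma natDegree_two_mul_le (r : F[X]) : (2 * r).natDegree ≤ r.natDegree := by
  rw [two_mul]; simpa using natDegree_add_le r r

lemma InV.tr {n : ℕ} {v : F[X] × F[X]} (hv : InV n v) {r : F[X]} (hr : r.natDegree ≤ n) :
    InV n (tr r v) := by
  refine ⟨natDegree_add_le_of_degree_le hv.1 ((natDegree_two_mul_le r).trans hr), ?_⟩
  refine (natDegree_sub_le_of_le (natDegree_sub_le_of_le hv.2 (natDegree_pow_le_of_le 2 hr))
    (natDegree_mul_le_of_le hv.1 hr)).trans ?_
  simp; omega

lemma InV.sc {n d : ℕ} (hd : d ≤ n) {v : F[X] × F[X]} (hv : InV (n - d) v) {D : F[X]}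
    (hD : D.natDegree ≤ d) : InV n (sc D v) := by
  refine ⟨(natDegree_mul_le_of_le hD hv.1).trans (by omega),
    (natDegree_mul_le_of_le (natDegree_pow_le_of_le 2 hD) hv.2).trans (by omega)⟩

lemma InV_zero (n : ℕ) : InV n ((0, 0) : F[X] × F[X]) := by simp [InV]

/-- A graded substitution operating on forms. -/
structure FormMap (φ : ℕ → F[X] → F[X]) : Prop where
  add : ∀ n p q, φ n (p + q) = φ n p + φ n q
  sub : ∀ n p q, φ n (p - q) = φ n p - φ n q
  mul : ∀ m n p q, p.natDegree ≤ m → q.natDegree ≤ n → φ (m + n) (p * q) = φ m p * φ n q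
  deg : ∀ n p, p.natDegree ≤ n → (φ n p).natDegree ≤ n
  ne : ∀ n p, p.natDegree ≤ n → p ≠ 0 → φ n p ≠ 0

/-- Application of a form map to pairs. -/
def fm (φ : ℕ → F[X] → F[X]) (n : ℕ) (v : F[X] × F[X]) : F[X] × F[X] :=
  (φ n v.1, φ (2 * n) v.2)

section
variable {φ : ℕ → F[X] → F[X]} (hφ : FormMap φ)
include hφ

lemma fm_zero (n : ℕ) : fm φ n (0, 0) = (0, 0) := by
  have h : ∀ n, φ n 0 = 0 := fun n => by simpa using hφ.sub n 0 0
  simp [fm, h]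

lemma fm_tr {n : ℕ} {v : F[X] × F[X]} (hv : InV n v) {r : F[X]} (hr : r.natDegree ≤ n) :
    fm φ n (tr r v) = tr (φ n r) (fm φ n v) := by
  ext1
  · simp only [fm, tr, two_mul, hφ.add]
  · simp only [fm, tr, hφ.sub, two_mul, pow_two, hφ.mul _ _ _ _ hr hr, hφ.mul _ _ _ _ hv.1 hr]

lemma fm_sc {n d : ℕ} (hd : d ≤ n) {v : F[X] × F[X]} (hv : InV (n - d) v) {D : F[X]}
    (hD : D.natDegree ≤ d) : fm φ n (sc D v) = sc (φ d D) (fm φ (n - d) v) := by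
  ext1
  · simp only [fm, sc]
    rw [← hφ.mul _ _ _ _ hD hv.1]; congr 1; omega
  · simp only [fm, sc]
    rw [pow_two, pow_two, ← hφ.mul _ _ _ _ hD hD, ← hφ.mul _ _ _ _ _ hv.2]
    · congr 1; omega
    · exact natDegree_mul_le_of_le hD hD

lemma InV.fm {n : ℕ} {v : F[X] × F[X]} (hv : InV n v) : InV n (fm φ n v) :=
  ⟨hφ.deg _ _ hv.1, hφ.deg _ _ hv.2⟩

lemma IsSq.fm {n : ℕ} {v : F[X] × F[X]} (h : IsSq n v) : IsSq n (fm φ n v) := by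
  obtain ⟨r, hr, rfl⟩ := h
  exact ⟨φ n r, hφ.deg _ _ hr, by rw [fm_tr hφ (InV_zero n) hr, fm_zero hφ]⟩

lemma Dv.fm {n : ℕ} {v : F[X] × F[X]} (h : Dv n v) : Dv n (fm φ n v) := by
  obtain ⟨d, hd1, hdn, D, r, w, hD0, hD, hr, hw, rfl⟩ := h
  exact ⟨d, hd1, hdn, φ d D, φ n r, HC.fm φ (n - d) w, hφ.ne _ _ hD hD0, hφ.deg _ _ hD,
    hφ.deg _ _ hr, hw.fm hφ, by rw [fm_tr hφ (hw.sc hdn hD) hr, fm_sc hφ hdn hw hD]⟩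

lemma Sm.of_fm {n : ℕ} {v : F[X] × F[X]} (hv : InV n v) (h : Sm n (HC.fm φ n v)) : Sm n v :=
  ⟨hv, fun h' => h.2.1 (h'.fm hφ), fun h' => h.2.2 (h'.fm hφ)⟩

end

lemma IsSq.tr {n : ℕ} {v : F[X] × F[X]} (h : IsSq n v) {r : F[X]} (hr : r.natDegree ≤ n) :
    IsSq n (tr r v) := by
  obtain ⟨s, hs, rfl⟩ := h
  exact ⟨r + s, natDegree_add_le_of_degree_le hr hs, by rw [tr_tr]⟩

lemma Dv.tr {n : ℕ} {v : F[X] × F[X]} (h : Dv n v) {r : F[X]} (hr : r.natDegree ≤ n) :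
    Dv n (tr r v) := by
  obtain ⟨d, hd1, hdn, D, s, w, hD0, hD, hs, hw, rfl⟩ := h
  exact ⟨d, hd1, hdn, D, r + s, w, hD0, hD, natDegree_add_le_of_degree_le hr hs, hw, by
    rw [tr_tr]⟩

lemma Sm.tr {n : ℕ} {v : F[X] × F[X]} (h : Sm n v) {r : F[X]} (hr : r.natDegree ≤ n) :
    Sm n (tr r v) := by
  have hr' : (-r).natDegree ≤ n := by simpa using hr
  have e : HC.tr (-r) (HC.tr r v) = v := by simp [tr_tr, tr_zero]
  exact ⟨h.1.tr hr, fun h' => h.2.1 (e ▸ h'.tr hr'), fun h' => h.2.2 (e ▸ h'.tr hr')⟩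

lemma natDegree_C_mul_le' {n : ℕ} (c : F) {r : F[X]} (hr : r.natDegree ≤ n) :
    (C c * r).natDegree ≤ n := (natDegree_C_mul_le c r).trans hr

lemma IsSq.sc {n : ℕ} {v : F[X] × F[X]} (h : IsSq n v) (c : F) : IsSq n (sc (C c) v) := by
  obtain ⟨s, hs, rfl⟩ := h
  exact ⟨C c * s, natDegree_C_mul_le' c hs, by rw [sc_tr, sc_zero_pair]⟩

lemma Dv.sc {n : ℕ} {v : F[X] × F[X]} (h : Dv n v) {c : F} (hc : c ≠ 0) :
    Dv n (sc (C c) v) := by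
  obtain ⟨d, hd1, hdn, D, s, w, hD0, hD, hs, hw, rfl⟩ := h
  exact ⟨d, hd1, hdn, C c * D, C c * s, w, mul_ne_zero (C_ne_zero.2 hc) hD0,
    natDegree_C_mul_le' c hD, natDegree_C_mul_le' c hs, hw, by rw [sc_tr, sc_sc]⟩

lemma InV.scC {n : ℕ} {v : F[X] × F[X]} (h : InV n v) (c : F) : InV n (HC.sc (C c) v) :=
  InV.sc (Nat.zero_le n) (by simpa using h) (natDegree_C c).le

lemma Sm.sc {n : ℕ} {v : F[X] × F[X]} (h : Sm n v) {c : F} (hc : c ≠ 0) :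
    Sm n (sc (C c) v) := by
  have e : HC.sc (C c⁻¹) (HC.sc (C c) v) = v := by
    rw [sc_sc, ← C_mul, inv_mul_cancel₀ hc, C_1, sc_one]
  exact ⟨h.1.scC c, fun h' => h.2.1 (e ▸ h'.sc c⁻¹),
    fun h' => h.2.2 (e ▸ h'.sc (inv_ne_zero hc))⟩

lemma formMap_psi (A : Matrix.GeneralLinearGroup (Fin 2) F) :
    FormMap (fun n => psiF n (A : Matrix (Fin 2) (Fin 2) F)) where
  add n p q := by simp only [psiF_eq, evf_add]
  sub n p q := by simp only [psiF_eq, evf_sub]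
  mul m n p q hp hq := by simp only [psiF_eq, evf_mul _ _ hp hq]
  deg n p _ := natDegree_psiF_le n _ p
  ne n p hp h0 := psiF_ne_zero A hp h0

lemma formMap_reflect : FormMap (fun n => (reflect n : F[X] → F[X])) where
  add n p q := reflect_add p q n
  sub n p q := reflect_sub p q n
  mul m n p q hp hq := reflect_mul p q hp hq
  deg n p hp := natDegree_reflect_le.trans (by simp [hp])
  ne n p _ h0 := by simpa using h0

lemma fm_psi_psi {n : ℕ} {v : F[X] × F[X]} (hv : InV n v)
    (A : Matrix.GeneralLinearGroup (Fin 2) F) :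
    fm (fun n => psiF n ((A⁻¹ : Matrix.GeneralLinearGroup (Fin 2) F) :
      Matrix (Fin 2) (Fin 2) F)) n (fm (fun n => psiF n (A : Matrix (Fin 2) (Fin 2) F)) n v)
      = v := by
  ext1
  · simp only [fm, psiF_psiF]; rw [← Units.val_mul, mul_inv_cancel, Units.val_one, psiF_one hv.1]
  · simp only [fm, psiF_psiF]; rw [← Units.val_mul, mul_inv_cancel, Units.val_one, psiF_one hv.2]

lemma Sm.psi {n : ℕ} {v : F[X] × F[X]} (h : Sm n v) (A : Matrix.GeneralLinearGroup (Fin 2) F) :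
    Sm n (fm (fun n => psiF n (A : Matrix (Fin 2) (Fin 2) F)) n v) := by
  refine Sm.of_fm (formMap_psi A⁻¹) (h.1.fm (formMap_psi A)) ?_
  rwa [fm_psi_psi h.1]

lemma fm_reflect_reflect (n : ℕ) (v : F[X] × F[X]) :
    fm (fun n => reflect n) n (fm (fun n => reflect n) n v) = v := by
  ext1 <;> simp [fm]

lemma Sm.reflect {n : ℕ} {v : F[X] × F[X]} (h : Sm n v) :
    Sm n (fm (fun n => Polynomial.reflect n) n v) := by
  refine Sm.of_fm formMap_reflect (h.1.fm formMap_reflect) ?_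
  rwa [fm_reflect_reflect]

end pairs

end HC

namespace HC

set_option linter.unusedSimpArgs false

/-! ### Geometric smoothness versus algebraic smoothness -/

section geom

variable {F : Type*} [Field F]

lemma natDegree_quot_le {D q : F[X]} {m : ℕ} (hD : D ≠ 0) (h : (D * q).natDegree ≤ m) :
    q.natDegree ≤ m - D.natDegree := by
  by_cases hq : q = 0
  · simp [hq]
  · rw [natDegree_mul hD hq] at h; omega

lemma two_K (h : (2 : F) = 0) : (2 : AlgebraicClosure F) = 0 := by
  rw [← map_ofNat (algebraMap F (AlgebraicClosure F)) 2, h, map_zero]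

lemma two_K_ne (h : (2 : F) ≠ 0) : (2 : AlgebraicClosure F) ≠ 0 := by
  rw [← map_ofNat (algebraMap F (AlgebraicClosure F)) 2]
  exact (_root_.map_ne_zero _).2 h

/-- A pair whose derivative vanishes in characteristic two is a square. -/
lemma eq_sq_of_derivative_eq_zero [Finite F] [CharP F 2] {p : F[X]} (h : derivative p = 0) :
    ∃ a : F[X], p = a ^ 2 := by
  have h1 := expand_contract 2 h two_ne_zero
  exact ⟨(contract 2 p).map (frobeniusEquiv F 2).symm, by rw [← polynomial_expand_eq, h1]⟩

lemma exists_poly_eval [Finite F] {Q P : F[X]} {x y : AlgebraicClosure F}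
    (h1 : y ^ 2 + aeval x Q * y - aeval x P = 0) (h2 : 2 * y + aeval x Q = 0) :
    ∃ r : F[X], aeval x r = y := by
  by_cases h : (2 : F) = 0
  · have hK : (2 : AlgebraicClosure F) = 0 := two_K h
    have : CharP F 2 := CharTwo.of_one_ne_zero_of_two_eq_zero one_ne_zero h
    have hQ : aeval x Q = 0 := by simpa [hK] using h2
    have hP : y ^ 2 = aeval x P := by
      rw [hQ] at h1; linear_combination h1
    have hIntg : IsIntegral F y := Algebra.IsIntegral.isIntegral y
    have : FiniteDimensional F (IntermediateField.adjoin F {y}) :=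
      IntermediateField.adjoin.finiteDimensional hIntg
    have : Finite (IntermediateField.adjoin F {y}) := Module.finite_of_finite F
    have := Fintype.ofFinite (IntermediateField.adjoin F {y})
    have : CharP (IntermediateField.adjoin F {y}) 2 := charP_of_injective_algebraMap
      (algebraMap F (IntermediateField.adjoin F {y})).injective 2
    have hc := FiniteField.even_card_of_char_two (F := IntermediateField.adjoin F {y})
      (ringChar.eq _ 2)
    have hy := FiniteField.pow_card (IntermediateField.AdjoinSimple.gen F y)
    have hy' := congrArg (algebraMap (IntermediateField.adjoin F {y}) (AlgebraicClosure F)) hy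
    rw [map_pow, IntermediateField.AdjoinSimple.algebraMap_gen] at hy'
    obtain ⟨k, hk⟩ := Nat.dvd_of_mod_eq_zero hc
    refine ⟨P ^ k, ?_⟩
    rw [map_pow, ← hP, ← pow_mul, ← hk, hy']
  · refine ⟨C (-(2:F)⁻¹) * Q, ?_⟩
    have hK : (2 : AlgebraicClosure F) ≠ 0 := two_K_ne h
    simp only [map_mul, aeval_C, map_neg, map_inv₀, map_ofNat]
    field_simp
    linear_combination -h2

lemma sq_dvd_of_double_root [Finite F] {R : F[X]} {x : AlgebraicClosure F}
    (h0 : aeval x R = 0) (h1 : aeval x (derivative R) = 0) : minpoly F x ^ 2 ∣ R := by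
  obtain ⟨S, hS⟩ := minpoly.dvd F x h0
  have hIntg : IsIntegral F x := Algebra.IsIntegral.isIntegral x
  have hsep : (minpoly F x).Separable := PerfectField.separable_of_irreducible
    (minpoly.irreducible hIntg)
  have hne := hsep.aeval_derivative_ne_zero (minpoly.aeval F x)
  have hS0 : aeval x S = 0 := by
    rw [hS, derivative_mul] at h1
    simpa [minpoly.aeval, hne] using h1
  obtain ⟨T, hT⟩ := minpoly.dvd F x hS0
  exact ⟨T, by rw [hS, hT]; ring⟩

lemma sing_affine [Finite F] {n : ℕ} {v : F[X] × F[X]} (hv : InV n v)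
    (hs : ¬ SmoothChartF v.1 v.2) : IsSq n v ∨ Dv n v := by
  obtain ⟨Q, P⟩ := v
  simp only [SmoothChartF, not_forall, not_not] at hs
  obtain ⟨x, y, h1, h2, h3⟩ := hs
  have hIntg : IsIntegral F x := Algebra.IsIntegral.isIntegral x
  have hm := minpoly.monic hIntg
  have key : ∀ r : F[X], aeval x r = y → minpoly F x ∣ Q + 2 * r ∧
      minpoly F x ^ 2 ∣ P - r ^ 2 - Q * r := by
    intro r hr
    refine ⟨minpoly.dvd F x ?_, sq_dvd_of_double_root ?_ ?_⟩
    · simp only [map_add, map_mul, map_ofNat, hr]; linear_combination h2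
    · simp [hr]; linear_combination -h1
    · simp only [derivative_sub, derivative_mul, derivative_pow, map_sub, map_mul, map_add, hr,
        map_pow]
      simp only [Nat.cast_ofNat, map_ofNat, hr]
      simp
      linear_combination -h3 - (aeval x (derivative r)) * h2
  obtain ⟨r0, hr0⟩ := exists_poly_eval h1 h2
  by_cases hd : (minpoly F x).natDegree ≤ n
  · right
    set r := r0 %ₘ minpoly F x with hr_def
    have hr : aeval x r = y := by
      rw [hr_def, aeval_modByMonic_eq_self_of_root (minpoly.aeval F x), hr0]
    have hrd : r.natDegree ≤ n := by
      refine le_trans (le_of_lt (natDegree_modByMonic_lt _ hm ?_)) hd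
      intro h; exact minpoly.ne_one F x h
    obtain ⟨⟨q, hq⟩, ⟨p, hp⟩⟩ := key r hr
    have hin := InV.tr hv hrd
    refine ⟨(minpoly F x).natDegree, minpoly.natDegree_pos hIntg, hd, minpoly F x, -r, (q, p),
      hm.ne_zero, le_rfl, by simpa using hrd, ⟨?_, ?_⟩, ?_⟩
    · apply natDegree_quot_le hm.ne_zero; rw [← hq]; exact hin.1
    · have h2n : (minpoly F x ^ 2 * p).natDegree ≤ 2 * n := by rw [← hp]; exact hin.2
      have := natDegree_quot_le (pow_ne_zero 2 hm.ne_zero) h2n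
      rw [natDegree_pow] at this
      simp only; omega
    · have : tr r (Q, P) = sc (minpoly F x) (q, p) := by simp only [tr, sc, hq, hp]
      rw [← this, tr_tr]; simp [tr_zero]
  · left
    push Not at hd
    by_cases h : (2 : F) = 0
    · have : CharP F 2 := CharTwo.of_one_ne_zero_of_two_eq_zero one_ne_zero h
      have h2F : (2 : F[X]) = 0 := by rw [← map_ofNat C 2, h, map_zero]
      have hK : (2 : AlgebraicClosure F) = 0 := two_K h
      have hQ0 : Q = 0 := by
        have hd1 := (key r0 hr0).1
        rw [h2F, zero_mul, add_zero] at hd1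
        exact eq_zero_of_dvd_of_natDegree_lt hd1 (lt_of_le_of_lt hv.1 hd)
      subst hQ0
      have hP' : minpoly F x ∣ derivative P := minpoly.dvd F x (by simpa using h3)
      have hdd : derivative (derivative P) = 0 := by
        ext i
        simp only [coeff_derivative, coeff_zero, mul_assoc]
        have : ((i : F) + 1 + 1) * ((i : F) + 1) = 0 := by
          have h' : (((i + 1) * (i + 2) : ℕ) : F) = 0 := by
            rw [CharP.cast_eq_zero_iff F 2]
            exact (Nat.even_mul_succ_self (i + 1)).two_dvd
          push_cast at h'
          linear_combination h'
        push_cast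
        rw [this, mul_zero]
      obtain ⟨G, hG⟩ := eq_sq_of_derivative_eq_zero hdd
      have hG0 : G = 0 := by
        rw [hG] at hP'
        refine eq_zero_of_dvd_of_natDegree_lt
          ((minpoly.prime hIntg).dvd_of_dvd_pow hP') (lt_of_le_of_lt ?_ hd)
        have := natDegree_derivative_le P
        rw [hG, natDegree_pow] at this
        have := hv.2
        simp only at this
        omega
      rw [hG0] at hG
      obtain ⟨a, ha⟩ := eq_sq_of_derivative_eq_zero (p := P) (by simpa using hG)
      refine ⟨a, ?_, ?_⟩
      · have := hv.2
        simp only [ha, natDegree_pow] at this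
        omega
      · simp only [tr, h2F, ha]
        ext1
        · simp
        · simp only; linear_combination (a ^ 2) * h2F
    · set r := C (-(2:F)⁻¹) * Q with hr_def
      have h2r : Q + 2 * r = 0 := by
        have : (2 : F[X]) * C (-(2:F)⁻¹) = -1 := by
          rw [← map_ofNat C 2, ← C_mul]; simp [h]
        rw [hr_def, ← mul_assoc, this]; ring
      have hr : aeval x r = y := by
        have := congrArg (aeval x) h2r
        simp only [map_add, map_mul, map_ofNat, map_zero] at this
        have hK : (2 : AlgebraicClosure F) ≠ 0 := two_K_ne h
        apply mul_left_cancel₀ hK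
        linear_combination this - h2
      have hrd : r.natDegree ≤ n := natDegree_C_mul_le' _ hv.1
      have hin := InV.tr hv hrd
      have hR : P - r ^ 2 - Q * r = 0 := by
        refine eq_zero_of_dvd_of_natDegree_lt (key r hr).2 (lt_of_le_of_lt hin.2 ?_)
        rw [natDegree_pow]; omega
      refine ⟨-r, by simpa using hrd, ?_⟩
      have : tr r (Q, P) = (0, 0) := by simp only [tr, h2r, hR]
      rw [← this, tr_tr]; simp [tr_zero]

lemma Sm.smooth [Finite F] {n : ℕ} {v : F[X] × F[X]} (h : Sm n v) : SmoothChartF v.1 v.2 := by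
  by_contra hs
  rcases sing_affine h.1 hs with h' | h'
  · exact h.2.1 h'
  · exact h.2.2 h'

lemma not_smooth_of_root {D r : F[X]} {w : F[X] × F[X]} {x : AlgebraicClosure F}
    (hx : aeval x D = 0) : ¬ SmoothChartF (tr r (sc D w)).1 (tr r (sc D w)).2 := by
  intro h
  refine h x (-aeval x r) ⟨?_, ?_, ?_⟩
  · simp only [tr, sc, map_add, map_sub, map_mul, map_pow, map_ofNat, hx]; ring
  · simp only [tr, sc, map_add, map_mul, map_ofNat, hx]; ring
  · have h2 : aeval x (C (2 : F)) = (2 : AlgebraicClosure F) := by simp only [map_ofNat]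
    simp only [tr, sc, derivative_add, derivative_sub, derivative_mul, derivative_pow,
      derivative_ofNat, map_add, map_sub, map_mul, map_pow, map_ofNat, hx, Nat.cast_ofNat, map_zero]
    simp only [map_one, pow_one, Nat.reduceSub, h2]
    ring

lemma not_smooth_of_Dv {n : ℕ} {v : F[X] × F[X]} (h : Dv n v)
    (h1 : SmoothChartF v.1 v.2)
    (h2 : SmoothChartF (reflect n v.1) (reflect (2 * n) v.2)) : False := by
  obtain ⟨d, hd1, hdn, D, r, w, hD0, hD, hr, hw, rfl⟩ := h
  by_cases hdeg : D.natDegree = 0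
  · obtain ⟨c, rfl⟩ := natDegree_eq_zero.1 hdeg
    have e := fm_tr formMap_reflect (hw.sc hdn hD) hr
    rw [fm_sc formMap_reflect hdn hw hD] at e
    have h2' : SmoothChartF (fm (fun n => reflect n) n (tr r (sc (C c) w))).1
      (fm (fun n => reflect n) n (tr r (sc (C c) w))).2 := h2
    rw [e] at h2'
    refine not_smooth_of_root (x := 0) ?_ h2'
    have : d ≠ 0 := by omega
    simp [reflect_C, this]
  · have : (D.map (algebraMap F (AlgebraicClosure F))).degree ≠ 0 := by
      rw [degree_map]
      intro h; exact hdeg (natDegree_eq_of_degree_eq_some h)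
    obtain ⟨x, hx⟩ := IsAlgClosed.exists_root _ this
    refine not_smooth_of_root (x := x) ?_ h1
    rwa [IsRoot.def, eval_map_algebraMap] at hx

lemma IsSq.dv {n : ℕ} (hn : 1 ≤ n) {v : F[X] × F[X]} (h : IsSq n v) : Dv n v := by
  obtain ⟨r, hr, rfl⟩ := h
  exact ⟨1, le_rfl, hn, 1, r, (0, 0), one_ne_zero, by simp, hr, InV_zero _, by
    rw [sc_zero_pair]⟩

lemma Sm_of_smooth {n : ℕ} (hn : 1 ≤ n) {v : F[X] × F[X]} (hv : InV n v)
    (h1 : SmoothChartF v.1 v.2)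
    (h2 : SmoothChartF (reflect n v.1) (reflect (2 * n) v.2)) : Sm n v :=
  ⟨hv, fun h => not_smooth_of_Dv (h.dv hn) h1 h2, fun h => not_smooth_of_Dv h h1 h2⟩

lemma not_split_of_root {Q P : F[X]} {u : (AlgebraicClosure F)[X]} (h : SmoothChartF Q P)
    (hu : u ^ 2 + Q.map (algebraMap F (AlgebraicClosure F)) * u =
        P.map (algebraMap F (AlgebraicClosure F))) (x : AlgebraicClosure F)
    (hx : (2 * u + Q.map (algebraMap F (AlgebraicClosure F))).IsRoot x) : False := by
  rw [IsRoot.def] at hx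
  have e0 := congrArg (eval x) hu
  have e1 := congrArg (fun p => eval x (derivative p)) hu
  simp only [eval_add, eval_mul, eval_ofNat, derivative_add, derivative_mul, derivative_pow,
    eval_pow, derivative_map, eval_map_algebraMap] at e0 e1 hx
  simp at e1
  refine h x (eval x u) ⟨?_, ?_, ?_⟩
  · linear_combination e0
  · exact hx
  · linear_combination e1 - (eval x (derivative u)) * hx

theorem isHypModel_iff [Finite F] (g : ℕ) (Q P : F[X]) :
    IsHypModel g Q P ↔ Sm (g + 1) (Q, P) := by
  constructor
  · rintro ⟨-, h2, h3, h4, -⟩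
    rw [max_le_iff] at h2
    exact Sm_of_smooth (by omega) ⟨by simp only; omega, by simp only; omega⟩ h3 h4
  · intro h
    have hch := h.smooth
    have hch2 : SmoothChartF (reflect (g + 1) Q) (reflect (2 * g + 2) P) := h.reflect.smooth
    have hQ : Q.natDegree ≤ g + 1 := h.1.1
    have hP : P.natDegree ≤ 2 * g + 2 := h.1.2
    refine ⟨?_, ?_, hch, hch2, ?_⟩
    · by_contra hlt
      push Not at hlt
      rw [max_lt_iff] at hlt
      refine h.2.2 ⟨1, le_rfl, by omega, 1, 0, (Q, P), one_ne_zero, by simp, by simp,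
        ⟨by simp only; omega, by simp only; omega⟩, by rw [sc_one, tr_zero]⟩
    · rw [max_le_iff]; omega
    · rintro ⟨u, hu⟩
      have hud : u.natDegree ≤ g + 1 := by
        by_contra hlt
        push Not at hlt
        set Q' := Q.map (algebraMap F (AlgebraicClosure F)) with hQ'
        have hlt' : Q'.natDegree < u.natDegree := by rw [hQ', natDegree_map]; omega
        have e : (u * (u + Q')).natDegree = P.natDegree := by
          rw [← natDegree_map (algebraMap F (AlgebraicClosure F)) (p := P), ← hu]
          congr 1; ring
        have e2 := natDegree_add_eq_left_of_natDegree_lt hlt'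
        rw [natDegree_mul, e2] at e
        · omega
        · rintro rfl; simp at hlt
        · intro h0; rw [h0] at e2; simp at e2; omega
      by_cases hdeg : (2 * u + Q.map (algebraMap F (AlgebraicClosure F))).degree = 0
      · have hc' := eq_C_of_degree_le_zero hdeg.le
        refine not_split_of_root (u := reflect (g + 1) u) hch2 ?_ 0 ?_
        · rw [← reflect_map, ← reflect_map, ← hu, reflect_add]
          have e : 2 * g + 2 = (g + 1) + (g + 1) := by ring
          rw [e, reflect_mul _ _ (by rwa [natDegree_map]) hud, pow_two, pow_two,
            reflect_mul _ _ hud hud]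
        · have := congrArg (reflect (g + 1)) hc'
          rw [two_mul, reflect_add, reflect_add, ← two_mul, reflect_map, reflect_C] at this
          rw [this]; simp
      · obtain ⟨x, hx⟩ := IsAlgClosed.exists_root _ hdeg
        exact not_split_of_root hch hu x hx

end geom

/-! ### Existence and uniqueness of the normal form -/

section normal

variable {F : Type*} [Field F]

lemma exists_normal {n : ℕ} {v : F[X] × F[X]} (hv : InV n v) :
    IsSq n v ∨ ∃ d, d ≤ n ∧ ∃ D r : F[X], ∃ w, D ≠ 0 ∧ D.natDegree ≤ d ∧ r.natDegree ≤ n ∧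
      Sm (n - d) w ∧ v = tr r (sc D w) := by
  induction n using Nat.strong_induction_on generalizing v with
  | _ n ih =>
    by_cases hsq : IsSq n v
    · exact Or.inl hsq
    by_cases hdv : Dv n v
    swap
    · exact Or.inr ⟨0, Nat.zero_le _, 1, 0, v, one_ne_zero, by simp, by simp,
        ⟨hv, hsq, hdv⟩, by rw [sc_one, tr_zero]⟩
    obtain ⟨d, hd1, hdn, D, r, w, hD0, hD, hr, hw, rfl⟩ := hdv
    have deg : ∀ s : F[X], s.natDegree ≤ n - d → (r + D * s).natDegree ≤ n := fun s hs =>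
      natDegree_add_le_of_degree_le hr ((natDegree_mul_le_of_le hD hs).trans (by omega))
    rcases ih (n - d) (by omega) hw with ⟨s, hs, rfl⟩ | ⟨e, he, E, s, w', hE0, hE, hs, hw', rfl⟩
    · exact Or.inl ⟨r + D * s, deg s hs, by rw [sc_tr, tr_tr, sc_zero_pair]⟩
    · refine Or.inr ⟨d + e, by omega, D * E, r + D * s, w', mul_ne_zero hD0 hE0,
        natDegree_mul_le_of_le hD hE, deg s hs, ?_, by rw [sc_tr, tr_tr, sc_sc]⟩
      rwa [← Nat.sub_sub]

lemma exists_coprime_quot {a : F[X]} (ha : a ≠ 0) (b : F[X]) :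
    ∃ g a' b' : F[X], g ≠ 0 ∧ a = g * a' ∧ b = g * b' ∧ IsCoprime a' b' := by
  classical
  obtain ⟨a', ha'⟩ := EuclideanDomain.gcd_dvd_left a b
  obtain ⟨b', hb'⟩ := EuclideanDomain.gcd_dvd_right a b
  have hg : EuclideanDomain.gcd a b ≠ 0 := by
    intro h; rw [h, zero_mul] at ha'; exact ha ha'
  refine ⟨_, a', b', hg, ha', hb', EuclideanDomain.gcdA a b, EuclideanDomain.gcdB a b, ?_⟩
  apply mul_left_cancel₀ hg
  have h := EuclideanDomain.gcd_eq_gcd_ab a b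
  linear_combination -h - (EuclideanDomain.gcdA a b) * ha' - (EuclideanDomain.gcdB a b) * hb'

lemma dvd_of_sq_dvd {G r s : F[X]} (hG : G ≠ 0) (h : G ^ 2 ∣ r ^ 2 + G * s * r) : G ∣ r := by
  obtain ⟨g, G', r', hg, rfl, rfl, hco⟩ := exists_coprime_quot hG r
  have h1 : G' ^ 2 ∣ r' ^ 2 + G' * s * r' := by
    rw [mul_pow] at h
    have e : (g * r') ^ 2 + g * G' * s * (g * r') = g ^ 2 * (r' ^ 2 + G' * s * r') := by ring
    rw [e] at h
    exact (mul_dvd_mul_iff_left (pow_ne_zero 2 hg)).1 h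
  have h2 : G' ∣ r' ^ 2 := by
    have := (dvd_pow_self G' two_ne_zero).trans h1
    rw [mul_assoc] at this
    exact (dvd_add_left (dvd_mul_right _ _)).1 this
  have h3 : IsUnit G' := (hco.pow_right (n := 2)).isUnit_of_dvd' dvd_rfl h2
  exact mul_dvd_mul_left g h3.dvd

lemma dvd_normal {D₁ D₂ r : F[X]} {w₁ w₂ : F[X] × F[X]} (hs : SmoothChartF w₂.1 w₂.2)
    (hD₁ : D₁ ≠ 0) (h : sc D₁ w₁ = tr r (sc D₂ w₂)) : D₁ ∣ D₂ ∧ D₁ ∣ r := by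
  obtain ⟨Q₁, P₁⟩ := w₁
  obtain ⟨Q₂, P₂⟩ := w₂
  have h1 := congrArg Prod.fst h
  have h2 := congrArg Prod.snd h
  simp only [sc, tr] at h1 h2
  obtain ⟨G, E₁, E₂, hG, rfl, rfl, hco⟩ := exists_coprime_quot hD₁ D₂
  obtain ⟨s, rfl⟩ : G ∣ r := by
    refine dvd_of_sq_dvd (s := E₂ * Q₂) hG ⟨E₂ ^ 2 * P₂ - E₁ ^ 2 * P₁, ?_⟩
    linear_combination h2
  have h1' : E₁ * Q₁ = E₂ * Q₂ + 2 * s := by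
    apply mul_left_cancel₀ hG; linear_combination h1
  have h2' : E₁ ^ 2 * P₁ = E₂ ^ 2 * P₂ - s ^ 2 - E₂ * Q₂ * s := by
    apply mul_left_cancel₀ (pow_ne_zero 2 hG); linear_combination h2
  have hu : IsUnit E₁ := by
    by_contra hu
    have hE₁ : E₁ ≠ 0 := right_ne_zero_of_mul hD₁
    have hdeg : (E₁.map (algebraMap F (AlgebraicClosure F))).degree ≠ 0 := by
      rw [degree_map]
      intro h0; exact hu (isUnit_iff_degree_eq_zero.2 h0)
    obtain ⟨x, hx⟩ := IsAlgClosed.exists_root _ hdeg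
    rw [IsRoot.def, eval_map_algebraMap] at hx
    have hE₂ : aeval x E₂ ≠ 0 := by
      intro h0
      obtain ⟨a, b, hab⟩ := hco
      have := congrArg (aeval x) hab
      simp [hx, h0] at this
    have e1 := congrArg (aeval x) h1'
    have e2 := congrArg (aeval x) h2'
    have e3 := congrArg (fun p => aeval x (derivative p)) h2'
    have h2c : aeval x (C (2 : F)) = (2 : AlgebraicClosure F) := by simp only [map_ofNat]
    simp only [derivative_add, derivative_sub, derivative_mul, derivative_pow,
      derivative_ofNat, map_add, map_sub, map_mul, map_pow, map_ofNat, hx, Nat.cast_ofNat,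
      map_zero] at e1 e2 e3
    simp only [map_one, pow_one, Nat.reduceSub, h2c] at e3
    refine hs x (aeval x s / aeval x E₂) ⟨?_, ?_, ?_⟩
    · field_simp; linear_combination e2
    · field_simp; linear_combination -e1
    · simp only
      have key : aeval x E₂ ^ 2 * (aeval x (derivative Q₂) * aeval x s -
          aeval x E₂ * aeval x (derivative P₂)) = 0 := by
        linear_combination (aeval x E₂) * e3 - 2 * (aeval x (derivative E₂)) * e2 -
          (aeval x (derivative E₂) * aeval x s - aeval x E₂ * aeval x (derivative s)) * e1
      have key' := (mul_eq_zero.1 key).resolve_left (pow_ne_zero 2 hE₂)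
      field_simp
      linear_combination key'
  exact ⟨mul_dvd_mul_left G hu.dvd, mul_dvd_mul_left G hu.dvd⟩

lemma X_pow_dvd_reflect {n k : ℕ} {p : F[X]} (hp : p.natDegree ≤ n) (hk : k ≤ n) :
    X ^ k ∣ reflect n p ↔ p.natDegree ≤ n - k := by
  rw [X_pow_dvd_iff, natDegree_le_iff_coeff_eq_zero]
  constructor
  · intro h N hN
    by_cases hNn : N ≤ n
    · have := h (n - N) (by omega)
      rw [coeff_reflect, revAt_le (by omega)] at this
      rwa [show n - (n - N) = N by omega] at this
    · exact coeff_eq_zero_of_natDegree_lt (by omega)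
  · intro h d hd
    rw [coeff_reflect, revAt_le (by omega)]
    exact h _ (by omega)

lemma uniq_normal [Finite F] {n d₁ d₂ : ℕ} (hd₁ : d₁ ≤ n) (hd₂ : d₂ ≤ n) {D₁ D₂ r₁ r₂ : F[X]}
    {w₁ w₂ : F[X] × F[X]} (h10 : D₁ ≠ 0) (h20 : D₂ ≠ 0) (hD₁ : D₁.natDegree ≤ d₁)
    (hD₂ : D₂.natDegree ≤ d₂) (hr₁ : r₁.natDegree ≤ n) (hr₂ : r₂.natDegree ≤ n)
    (hw₁ : Sm (n - d₁) w₁) (hw₂ : Sm (n - d₂) w₂)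
    (h : tr r₁ (sc D₁ w₁) = tr r₂ (sc D₂ w₂)) :
    d₁ = d₂ ∧ ∃ a : F, a ≠ 0 ∧ D₂ = C a * D₁ ∧ ∃ t : F[X], t.natDegree ≤ n - d₁ ∧
      r₂ = r₁ + D₁ * t := by
  have hrd : (r₂ - r₁).natDegree ≤ n := by simpa using natDegree_sub_le_of_le hr₂ hr₁
  have hrd' : (r₁ - r₂).natDegree ≤ n := by simpa using natDegree_sub_le_of_le hr₁ hr₂
  have e1 : sc D₁ w₁ = tr (r₂ - r₁) (sc D₂ w₂) := by
    have := congrArg (tr (-r₁)) h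
    rw [tr_tr, tr_tr, neg_add_cancel, tr_zero] at this
    rw [this]; congr 1; ring
  have e2 : sc D₂ w₂ = tr (r₁ - r₂) (sc D₁ w₁) := by
    rw [e1, tr_tr]; simp [tr_zero]
  have f1 := congrArg (fm (fun n => reflect n) n) e1
  have f2 := congrArg (fm (fun n => reflect n) n) e2
  rw [fm_tr formMap_reflect (hw₂.1.sc hd₂ hD₂) hrd, fm_sc formMap_reflect hd₁ hw₁.1 hD₁,
    fm_sc formMap_reflect hd₂ hw₂.1 hD₂] at f1
  rw [fm_tr formMap_reflect (hw₁.1.sc hd₁ hD₁) hrd', fm_sc formMap_reflect hd₁ hw₁.1 hD₁,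
    fm_sc formMap_reflect hd₂ hw₂.1 hD₂] at f2
  obtain ⟨g1, g1'⟩ := dvd_normal hw₂.smooth h10 e1
  obtain ⟨g2, -⟩ := dvd_normal hw₁.smooth h20 e2
  obtain ⟨k1, k1'⟩ := dvd_normal hw₂.reflect.smooth (by simpa using h10) f1
  obtain ⟨k2, -⟩ := dvd_normal hw₁.reflect.smooth (by simpa using h20) f2
  have hdeg : D₁.natDegree = D₂.natDegree :=
    le_antisymm (natDegree_le_of_dvd g1 h20) (natDegree_le_of_dvd g2 h10)
  have l1 : X ^ (d₁ - D₁.natDegree) ∣ reflect d₁ D₁ :=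
    (X_pow_dvd_reflect hD₁ (Nat.sub_le _ _)).2 (by omega)
  have l2 : X ^ (d₂ - D₂.natDegree) ∣ reflect d₂ D₂ :=
    (X_pow_dvd_reflect hD₂ (Nat.sub_le _ _)).2 (by omega)
  have hdd : d₁ = d₂ := by
    by_contra hne
    rcases Nat.lt_or_gt_of_ne hne with hlt | hlt
    · have m := (pow_dvd_pow X (show d₁ - D₁.natDegree + 1 ≤ d₂ - D₂.natDegree by omega)).trans
        (l2.trans k2)
      by_cases hz : d₁ - D₁.natDegree + 1 ≤ d₁
      · have := (X_pow_dvd_reflect hD₁ hz).1 m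
        omega
      · have := natDegree_le_of_dvd m (by simpa using h10)
        rw [natDegree_X_pow] at this
        have h3 : (reflect d₁ D₁).natDegree ≤ d₁ := formMap_reflect.deg _ _ hD₁
        omega
    · have m := (pow_dvd_pow X (show d₂ - D₂.natDegree + 1 ≤ d₁ - D₁.natDegree by omega)).trans
        (l1.trans k1)
      by_cases hz : d₂ - D₂.natDegree + 1 ≤ d₂
      · have := (X_pow_dvd_reflect hD₂ hz).1 m
        omega
      · have := natDegree_le_of_dvd m (by simpa using h20)
        rw [natDegree_X_pow] at this
        have h3 : (reflect d₂ D₂).natDegree ≤ d₂ := formMap_reflect.deg _ _ hD₂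
        omega
  refine ⟨hdd, ?_⟩
  obtain ⟨c, hc⟩ := g1
  have hc0 : c ≠ 0 := by rintro rfl; simp at hc; exact h20 hc
  have hcd : c.natDegree = 0 := by
    rw [hc, natDegree_mul h10 hc0] at hdeg; omega
  obtain ⟨a, rfl⟩ := natDegree_eq_zero.1 hcd
  refine ⟨a, by simpa using hc0, by rw [hc, mul_comm], ?_⟩
  obtain ⟨t, ht⟩ := g1'
  refine ⟨t, ?_, by rw [← ht]; ring⟩
  by_cases ht0 : t = 0
  · simp [ht0]
  have m := (X_pow_dvd_reflect hrd (by omega)).1 (l1.trans k1')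
  rw [ht, natDegree_mul h10 ht0] at m
  omega

end normal

end HC

namespace HC

section counting
open Classical
variable {F : Type*} [Field F] [Fintype F]

omit [Fintype F] in
lemma deg_iff (n : ℕ) (p : F[X]) : p.natDegree ≤ n ↔ p ∈ degreeLT F (n + 1) := by
  rw [natDegree_le_iff_coeff_eq_zero, mem_degreeLT, degree_lt_iff_coeff_zero]
  exact forall_congr' fun m => by rw [Nat.lt_iff_add_one_le]

lemma finite_deg (n : ℕ) : {p : F[X] | p.natDegree ≤ n}.Finite := by
  have : {p : F[X] | p.natDegree ≤ n} = (degreeLT F (n + 1) : Set F[X]) := by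
    ext p
    exact deg_iff n p
  rw [this]
  have : Finite (degreeLT F (n + 1)) := Finite.of_equiv _ (degreeLTEquiv F (n + 1)).symm.toEquiv
  exact Set.toFinite _

/-- Polynomials of degree at most n. -/
def BP (F : Type*) [Field F] [Fintype F] (n : ℕ) : Finset F[X] := (finite_deg (F := F) n).toFinset

lemma mem_BP {n : ℕ} {p : F[X]} : p ∈ BP F n ↔ p.natDegree ≤ n := by simp [BP]

lemma card_BP (n : ℕ) : (BP F n).card = Fintype.card F ^ (n + 1) := by
  have e : BP F n ≃ (Fin (n + 1) → F) := by
    refine Equiv.trans (Equiv.subtypeEquivRight fun p => ?_) (degreeLTEquiv F (n + 1)).toEquiv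
    rw [mem_BP, deg_iff]
  rw [← Fintype.card_coe, Fintype.card_congr e]; simp

/-- Sums over the fibres of an additive map that is onto. -/
lemma sum_BP_hom {H : Type*} [AddCommGroup H] [Fintype H] (n : ℕ) (e : F[X] →+ H)
    (he : ∀ h, ∃ p : F[X], p.natDegree ≤ n ∧ e p = h) (f : H → ℚ) :
    (Fintype.card H : ℚ) * ∑ p ∈ BP F n, f (e p) =
      (Fintype.card F : ℚ) ^ (n + 1) * ∑ h, f h := by
  have hc : ∀ h : H, ((BP F n).filter (fun p => e p = h)).card
      = ((BP F n).filter (fun p => e p = 0)).card := by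
    intro h
    obtain ⟨p₀, hp₀, rfl⟩ := he h
    refine Finset.card_bij' (fun p _ => p - p₀) (fun p _ => p + p₀) ?_ ?_ ?_ ?_
    · intro p hp
      simp only [Finset.mem_filter, mem_BP] at hp ⊢
      exact ⟨natDegree_sub_le_of_le hp.1 hp₀ |>.trans (by simp), by simp [hp.2]⟩
    · intro p hp
      simp only [Finset.mem_filter, mem_BP] at hp ⊢
      exact ⟨natDegree_add_le_of_degree_le hp.1 hp₀, by simp [hp.2]⟩
    · intro p _; simp
    · intro p _; simp
  set k := ((BP F n).filter (fun p => e p = 0)).card with hk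
  have h1 : ∀ f : H → ℚ, ∑ p ∈ BP F n, f (e p) = k * ∑ h, f h := by
    intro f
    rw [← Finset.sum_fiberwise (BP F n) e (fun p => f (e p)), Finset.mul_sum]
    refine Finset.sum_congr rfl fun h _ => ?_
    rw [← hc h, Finset.sum_congr rfl (g := fun _ => f h), Finset.sum_const, nsmul_eq_mul]
    intro p hp
    rw [(Finset.mem_filter.1 hp).2]
  have h2 := h1 (fun _ => 1)
  simp only [Finset.sum_const, card_BP, nsmul_eq_mul, mul_one, Finset.card_univ] at h2
  rw [h1]
  push_cast at h2
  rw [h2]; ring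

/-- All pairs. -/
def VP (F : Type*) [Field F] [Fintype F] (n : ℕ) : Finset (F[X] × F[X]) := BP F n ×ˢ BP F (2 * n)

lemma mem_VP {n : ℕ} {v : F[X] × F[X]} : v ∈ VP F n ↔ InV n v := by
  simp [VP, mem_BP, InV]

/-- The smooth pairs. -/
def SmF (F : Type*) [Field F] [Fintype F] (n : ℕ) : Finset (F[X] × F[X]) :=
  (VP F n).filter (fun v => Sm n v)

lemma mem_SmF {n : ℕ} {v : F[X] × F[X]} : v ∈ SmF F n ↔ Sm n v := by
  simp only [SmF, Finset.mem_filter, mem_VP]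
  exact ⟨fun h => h.2, fun h => ⟨h.1, h⟩⟩

/-- Index set of normal forms. -/
def NF (F : Type*) [Field F] [Fintype F] (n d : ℕ) : Finset (F[X] × (F[X] × F[X]) × F[X]) :=
  (BP F d).erase 0 ×ˢ SmF F (n - d) ×ˢ BP F n

lemma mem_NF {n d : ℕ} {x : F[X] × (F[X] × F[X]) × F[X]} :
    x ∈ NF F n d ↔ x.1 ≠ 0 ∧ x.1.natDegree ≤ d ∧ Sm (n - d) x.2.1 ∧ x.2.2.natDegree ≤ n := by
  simp [NF, mem_BP, mem_SmF, and_assoc]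

/-- The pair attached to a normal form. -/
def nf (x : F[X] × (F[X] × F[X]) × F[X]) : F[X] × F[X] := tr x.2.2 (sc x.1 x.2.1)

lemma card_units_ne : ((Finset.univ : Finset F).erase 0).card = Fintype.card F - 1 := by
  simp [Finset.card_erase_of_mem]

lemma fiber_same {n d : ℕ} (hd : d ≤ n) {D r : F[X]} {w : F[X] × F[X]} (hD0 : D ≠ 0)
    (hD : D.natDegree ≤ d) (hr : r.natDegree ≤ n) (hw : Sm (n - d) w) :
    ((NF F n d).filter (fun x => nf x = tr r (sc D w))).card =
      (Fintype.card F - 1) * Fintype.card F ^ (n - d + 1) := by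
  rw [← card_units_ne, ← card_BP (F := F) (n - d), ← Finset.card_product]
  symm
  refine Finset.card_bij
    (fun at' _ => (C at'.1 * D, sc (C at'.1⁻¹) (tr (-at'.2) w), r + D * at'.2)) ?_ ?_ ?_
  · rintro ⟨a, t⟩ h
    simp only [Finset.mem_product, Finset.mem_erase, mem_BP, Finset.mem_univ, and_true] at h
    obtain ⟨ha, ht⟩ := h
    simp only [Finset.mem_filter, mem_NF]
    refine ⟨⟨mul_ne_zero (C_ne_zero.2 ha) hD0, natDegree_C_mul_le' a hD,
      (hw.tr (by simpa using ht)).sc (inv_ne_zero ha), ?_⟩, ?_⟩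
    · exact natDegree_add_le_of_degree_le hr
        ((natDegree_mul_le_of_le hD ht).trans (by omega))
    · simp only [nf]
      rw [sc_sc, mul_right_comm, ← C_mul, mul_inv_cancel₀ ha, C_1, one_mul, sc_tr, tr_tr]
      congr 1; ring
  · rintro ⟨a, t⟩ h ⟨b, s⟩ h' heq
    simp only [Prod.mk.injEq] at heq
    have h1 := C_injective (mul_right_cancel₀ hD0 heq.1)
    have h2 := mul_left_cancel₀ hD0 (add_left_cancel heq.2.2)
    simp [h1, h2]
  · rintro ⟨D', w', r'⟩ h
    rw [Finset.mem_filter, mem_NF] at h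
    simp only [nf] at h
    obtain ⟨⟨h0, hD', hw', hr'⟩, h⟩ := h
    obtain ⟨-, a, ha, hDa, t, ht, hrt⟩ := uniq_normal hd hd hD0 h0 hD hD' hr hr' hw hw' h.symm
    refine ⟨(a, t), by simp [ha, mem_BP, ht], ?_⟩
    have : sc D' w' = sc D' (sc (C a⁻¹) (tr (-t) w)) := by
      rw [sc_sc, hDa, mul_right_comm, ← C_mul, mul_inv_cancel₀ ha, C_1, one_mul, ← hDa, sc_tr]
      apply tr_inj r'
      rw [h, tr_tr, hrt]; congr 1; ring
    simp only [Prod.mk.injEq]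
    exact ⟨hDa.symm, (sc_inj h0 this).symm, hrt.symm⟩

lemma fiber_diff {n d d' : ℕ} (hd : d ≤ n) (hd' : d' ≤ n) (hne : d' ≠ d) {D r : F[X]}
    {w : F[X] × F[X]} (hD0 : D ≠ 0)
    (hD : D.natDegree ≤ d) (hr : r.natDegree ≤ n) (hw : Sm (n - d) w) :
    ((NF F n d').filter (fun x => nf x = tr r (sc D w))).card = 0 := by
  rw [Finset.card_eq_zero, Finset.filter_eq_empty_iff]
  rintro ⟨D', w', r'⟩ h heq
  simp only [mem_NF, nf] at h heq
  obtain ⟨h0, hD', hw', hr'⟩ := h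
  exact hne (uniq_normal hd' hd h0 hD0 hD' hD hr' hr hw' hw heq).1

lemma one_lt_q : (1 : ℚ) < Fintype.card F := by exact_mod_cast Fintype.one_lt_card

theorem decomposition (n : ℕ) (f : F[X] × F[X] → ℚ) (hf : ∀ v, IsSq n v → f v = 0) :
    ∑ v ∈ VP F n, f v = ∑ d ∈ Finset.range (n + 1),
      (((Fintype.card F : ℚ) - 1) * (Fintype.card F : ℚ) ^ (n - d + 1))⁻¹ *
        ∑ x ∈ NF F n d, f (nf x) := by
  have key : ∀ d ∈ Finset.range (n + 1), ∑ x ∈ NF F n d, f (nf x) =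
      ∑ v ∈ VP F n, (((NF F n d).filter (fun x => nf x = v)).card : ℚ) * f v := by
    intro d hd
    have hd : d ≤ n := by simpa [Nat.lt_succ_iff] using hd
    have hmap : ∀ x ∈ NF F n d, nf x ∈ VP F n := by
      rintro ⟨D, w, r⟩ h
      rw [mem_NF] at h
      exact mem_VP.2 ((h.2.2.1.1.sc hd h.2.1).tr h.2.2.2)
    rw [← Finset.sum_fiberwise_of_maps_to hmap]
    refine Finset.sum_congr rfl fun v _ => ?_
    rw [← nsmul_eq_mul, ← Finset.sum_const]
    refine Finset.sum_congr rfl fun x hx => ?_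
    rw [(Finset.mem_filter.1 hx).2]
  symm
  rw [Finset.sum_congr rfl (fun d hd => by rw [key d hd, Finset.mul_sum]), Finset.sum_comm]
  refine Finset.sum_congr rfl fun v hv => ?_
  rcases exists_normal (mem_VP.1 hv) with h | ⟨d, hd, D, r, w, hD0, hD, hr, hw, rfl⟩
  · simp [hf v h]
  · rw [Finset.sum_eq_single_of_mem d (by simpa [Nat.lt_succ_iff] using hd)]
    · rw [fiber_same hd hD0 hD hr hw]
      have h1 := one_lt_q (F := F)
      have h2 : ((Fintype.card F : ℚ) - 1) * (Fintype.card F : ℚ) ^ (n - d + 1) ≠ 0 := by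
        have : (Fintype.card F : ℚ) - 1 ≠ 0 := by linarith
        have : (Fintype.card F : ℚ) ≠ 0 := by linarith
        positivity
      push_cast [Nat.cast_sub (Fintype.one_lt_card (α := F)).le]
      rw [← mul_assoc, inv_mul_cancel₀ h2, one_mul]
    · intro d' hd' hne
      rw [fiber_diff hd (by simpa [Nat.lt_succ_iff] using hd') hne hD0 hD hr hw]
      simp

end counting
end HC

namespace HC

section points
open Classical

/-- Number of solutions of y² + a y = b, minus one. -/
def GG {L : Type*} [Field L] [Fintype L] (a b : L) : ℚ :=
  ((Finset.univ.filter (fun y : L => y ^ 2 + a * y = b)).card : ℚ) - 1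

variable {L : Type*} [Field L] [Fintype L]

lemma GG_shift (a b s : L) : GG (a + 2 * s) (b - s ^ 2 - a * s) = GG a b := by
  unfold GG
  congr 2
  refine Finset.card_bij' (fun y _ => y + s) (fun y _ => y - s) ?_ ?_ ?_ ?_
  · intro y hy
    simp only [Finset.mem_filter, Finset.mem_univ, true_and] at hy ⊢
    linear_combination hy
  · intro y hy
    simp only [Finset.mem_filter, Finset.mem_univ, true_and] at hy ⊢
    linear_combination hy
  · simp
  · simp

lemma GG_scale (a b : L) {c : L} (hc : c ≠ 0) : GG (c * a) (c ^ 2 * b) = GG a b := by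
  unfold GG
  congr 2
  refine Finset.card_bij' (fun y _ => c⁻¹ * y) (fun y _ => c * y) ?_ ?_ ?_ ?_
  · intro y hy
    simp only [Finset.mem_filter, Finset.mem_univ, true_and] at hy ⊢
    apply mul_left_cancel₀ (pow_ne_zero 2 hc)
    rw [← hy]; field_simp
  · intro y hy
    simp only [Finset.mem_filter, Finset.mem_univ, true_and] at hy ⊢
    rw [← hy]; ring
  · intro y _; field_simp
  · intro y _; field_simp

lemma GG_zero : GG (0 : L) 0 = 0 := by
  have : (Finset.univ.filter (fun y : L => y ^ 2 + 0 * y = 0)) = {0} := by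
    ext y; simp
  rw [GG, this]; simp

lemma GG_sum (a : L) : ∑ b : L, GG a b = 0 := by
  unfold GG
  rw [Finset.sum_sub_distrib]
  have := Finset.card_eq_sum_card_fiberwise (s := (Finset.univ : Finset L)) (t := Finset.univ)
    (f := fun y => y ^ 2 + a * y) (fun _ _ => Finset.mem_coe.2 (Finset.mem_univ _))
  rw [← Nat.cast_sum, ← this]
  simp

variable {F : Type*} [Field F] [Fintype F] [Algebra F L]

/-- Local point excess at the point (u, v). -/
def eps (n : ℕ) (u v : L) (w : F[X] × F[X]) : ℚ := GG (evf n u v w.1) (evf (2 * n) u v w.2)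

omit [Fintype F] in
lemma eps_tr {n : ℕ} (u v : L) {w : F[X] × F[X]} (hw : InV n w) {r : F[X]}
    (hr : r.natDegree ≤ n) : eps n u v (tr r w) = eps n u v w := by
  unfold eps tr
  have h1 : evf (2 * n) u v (w.1 * r) = evf n u v w.1 * evf n u v r := by
    rw [two_mul, evf_mul u v hw.1 hr]
  rw [two_mul, evf_add, evf_add, evf_sub, evf_sub, evf_pow u v hr, h1, ← two_mul, GG_shift]

omit [Fintype F] [Fintype L] in
lemma evf_sc {n d : ℕ} (hd : d ≤ n) (u v : L) {w : F[X] × F[X]} (hw : InV (n - d) w) {D : F[X]}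
    (hD : D.natDegree ≤ d) : evf n u v (sc D w).1 = evf d u v D * evf (n - d) u v w.1 ∧
      evf (2 * n) u v (sc D w).2 = evf d u v D ^ 2 * evf (2 * (n - d)) u v w.2 := by
  constructor
  · conv_lhs => rw [show n = d + (n - d) by omega]
    exact evf_mul u v hD hw.1
  · conv_lhs => rw [show 2 * n = 2 * d + 2 * (n - d) by omega]
    rw [← evf_pow u v hD]
    exact evf_mul u v (natDegree_pow_le_of_le 2 hD) hw.2

omit [Fintype F] in
lemma eps_sc {n d : ℕ} (hd : d ≤ n) (u v : L) {w : F[X] × F[X]} (hw : InV (n - d) w) {D : F[X]}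
    (hD : D.natDegree ≤ d) :
    eps n u v (sc D w) = if evf d u v D ≠ 0 then eps (n - d) u v w else 0 := by
  unfold eps
  rw [(evf_sc hd u v hw hD).1, (evf_sc hd u v hw hD).2]
  split_ifs with h
  · exact GG_scale _ _ h
  · simp only [ne_eq, not_not] at h
    simp [h, GG_zero]

omit [Fintype F] in
lemma eps_IsSq {n : ℕ} (u v : L) {w : F[X] × F[X]} (hw : IsSq n w) : eps n u v w = 0 := by
  obtain ⟨r, hr, rfl⟩ := hw
  rw [eps_tr u v (InV_zero n) hr]
  simp [eps, evf_zero, GG_zero]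

/-- Total excess of all pairs. -/
def TT (F : Type*) [Field F] [Fintype F] [Algebra F L] (n : ℕ) (u v : L) : ℚ :=
  ∑ w ∈ VP F n, eps n u v w

/-- Total excess of the smooth pairs. -/
def SS (F : Type*) [Field F] [Fintype F] [Algebra F L] (n : ℕ) (u v : L) : ℚ :=
  ∑ w ∈ SmF F n, eps n u v w

/-- Number of forms not vanishing at the point. -/
def NN (F : Type*) [Field F] [Fintype F] [Algebra F L] (d : ℕ) (u v : L) : ℚ :=
  ∑ D ∈ BP F d, if evf d u v D ≠ 0 then 1 else 0

lemma TT_eq (n : ℕ) (u v : L) : TT F n u v = ∑ d ∈ Finset.range (n + 1),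
    (Fintype.card F : ℚ) ^ d * (NN F d u v / ((Fintype.card F : ℚ) - 1)) * SS F (n - d) u v := by
  unfold TT
  rw [decomposition n _ (fun w hw => eps_IsSq u v hw)]
  refine Finset.sum_congr rfl fun d hd => ?_
  have hd : d ≤ n := by simpa [Nat.lt_succ_iff] using hd
  have key : ∑ x ∈ NF F n d, eps n u v (nf x) =
      NN F d u v * SS F (n - d) u v * (Fintype.card F : ℚ) ^ (n + 1) := by
    have : ∑ x ∈ NF F n d, eps n u v (nf x) = ∑ x ∈ NF F n d,
        (if evf d u v x.1 ≠ 0 then 1 else 0) * eps (n - d) u v x.2.1 := by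
      refine Finset.sum_congr rfl fun x hx => ?_
      rw [mem_NF] at hx
      obtain ⟨h0, hD, hw, hr⟩ := hx
      rw [nf, eps_tr u v (hw.1.sc hd hD) hr, eps_sc hd u v hw.1 hD]
      simp
    rw [this, NF, Finset.sum_product, NN, SS, Finset.sum_mul, Finset.sum_mul]
    rw [← Finset.sum_erase (BP F d) (a := 0) (by simp [evf_zero])]
    refine Finset.sum_congr rfl fun D hD => ?_
    rw [Finset.sum_product, Finset.mul_sum, Finset.sum_mul]
    refine Finset.sum_congr rfl fun w hw => ?_
    have hsum := Finset.sum_const (s := BP F n)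
      ((if evf d u v D ≠ 0 then 1 else 0) * eps (n - d) u v w)
    rw [card_BP, nsmul_eq_mul] at hsum
    refine hsum.trans ?_
    push_cast; ring
  rw [key]
  have h1 := one_lt_q (F := F)
  have h2 : (Fintype.card F : ℚ) - 1 ≠ 0 := by linarith
  have h3 : (Fintype.card F : ℚ) ≠ 0 := by linarith
  have h4 : (Fintype.card F : ℚ) ^ (n + 1) =
    (Fintype.card F : ℚ) ^ d * (Fintype.card F : ℚ) ^ (n - d + 1) := by
    rw [← pow_add]; congr 1; omega
  rw [h4]
  field_simp

omit [Fintype F] [Fintype L] in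
lemma evf_alg (n : ℕ) (u v : F) (p : F[X]) :
    evf n (algebraMap F L u) (algebraMap F L v) p = algebraMap F L (evf n u v p) := by
  simp [evf]

omit [Fintype F] in
lemma evf_surj (n : ℕ) {u v : F} (h : ¬ (u = 0 ∧ v = 0)) (c : F) :
    ∃ p : F[X], p.natDegree ≤ n ∧ evf n u v p = c := by
  by_cases hv : v = 0
  · have hu : u ≠ 0 := fun h' => h ⟨h', hv⟩
    refine ⟨monomial n (c / u ^ n), natDegree_monomial_le _, ?_⟩
    rw [evf, Finset.sum_eq_single n]
    · simp; field_simp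
    · intro i _ hi; simp [coeff_monomial, hi.symm]
    · simp
  · refine ⟨C (c / v ^ n), by simp, ?_⟩
    rw [evf, Finset.sum_eq_single 0]
    · simp; field_simp
    · intro i _ hi; simp [coeff_C, hi]
    · simp

lemma quad_bij (hL : Fintype.card L = Fintype.card F ^ 2) {x : L}
    (hx : x ∉ Set.range (algebraMap F L)) :
    Function.Bijective (fun st : F × F => algebraMap F L st.1 + algebraMap F L st.2 * x) := by
  rw [Fintype.bijective_iff_injective_and_card]
  refine ⟨?_, by rw [hL, Fintype.card_prod, sq]⟩
  rintro ⟨s, t⟩ ⟨s', t'⟩ h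
  simp only at h
  by_cases ht : t = t'
  · subst ht
    simpa using h
  · exfalso
    apply hx
    have h' : algebraMap F L (t - t') ≠ 0 := by
      rw [Ne, map_eq_zero]; exact sub_ne_zero.2 ht
    refine ⟨(s' - s) / (t - t'), ?_⟩
    rw [map_div₀, div_eq_iff h']
    simp only [map_sub]
    linear_combination -h

/-- The sum of all excesses with coefficients in the base field. -/
lemma GG_base (hL : Fintype.card L = Fintype.card F ^ 2) :
    ∑ a : F, ∑ b : F, GG (algebraMap F L a) (algebraMap F L b) =
      (Fintype.card F : ℚ) ^ 2 - Fintype.card F := by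
  have h1 : ∀ y : L, ∑ a : F, ∑ b : F,
      (if y ^ 2 + algebraMap F L a * y = algebraMap F L b then (1 : ℚ) else 0) =
      if y ∈ Set.range (algebraMap F L) then (Fintype.card F : ℚ) else 1 := by
    intro y
    split_ifs with hy
    · obtain ⟨z, rfl⟩ := hy
      have : ∀ a : F, ∑ b : F, (if (algebraMap F L z) ^ 2 + algebraMap F L a * algebraMap F L z =
          algebraMap F L b then (1 : ℚ) else 0) = 1 := by
        intro a
        rw [Finset.sum_eq_single (z ^ 2 + a * z)]
        · simp
        · intro b _ hb
          rw [if_neg]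
          intro h
          apply hb
          apply (algebraMap F L).injective
          rw [← h]; simp
        · simp
      rw [Finset.sum_congr rfl fun a _ => this a]
      simp
    · obtain ⟨hi, hs⟩ := quad_bij hL hy
      obtain ⟨⟨s, t⟩, hst⟩ := hs (y ^ 2)
      simp only at hst
      rw [← Fintype.sum_prod_type' (f := fun a b =>
        if y ^ 2 + algebraMap F L a * y = algebraMap F L b then (1 : ℚ) else 0)]
      rw [Finset.sum_eq_single (-t, s)]
      · rw [if_pos]
        simp only [map_neg]
        linear_combination -hst
      · rintro ⟨a, b⟩ _ hab
        rw [if_neg]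
        intro h
        apply hab
        have := hi (a₁ := (s, t)) (a₂ := (b, -a)) (by
          simp only [map_neg]; linear_combination hst + h)
        simp only [Prod.mk.injEq] at this
        simp [this]
      · simp
  have h2 : ∑ a : F, ∑ b : F, GG (algebraMap F L a) (algebraMap F L b) =
      ∑ y : L, (∑ a : F, ∑ b : F,
        (if y ^ 2 + algebraMap F L a * y = algebraMap F L b then (1 : ℚ) else 0)) -
        (Fintype.card F : ℚ) ^ 2 := by
    rw [Finset.sum_comm (s := (Finset.univ : Finset L)),
      Finset.sum_congr rfl fun a _ => Finset.sum_comm (s := (Finset.univ : Finset L))]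
    have : (Fintype.card F : ℚ) ^ 2 = ∑ a : F, ∑ b : F, (1 : ℚ) := by simp [sq]
    rw [this, ← Finset.sum_sub_distrib]
    refine Finset.sum_congr rfl fun a _ => ?_
    rw [← Finset.sum_sub_distrib]
    refine Finset.sum_congr rfl fun b _ => ?_
    simp [GG, Finset.sum_boole]
  have h3 : (Finset.univ.filter (fun y : L => y ∈ Set.range (algebraMap F L))).card =
      Fintype.card F := by
    rw [← Finset.card_univ (α := F), ← Finset.card_image_of_injective Finset.univ
      (algebraMap F L).injective]
    congr 1
    ext y; simp
  have h4 : ∀ y : L, (if y ∈ Set.range (algebraMap F L) then (Fintype.card F : ℚ) else 1) =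
      (if y ∈ Set.range (algebraMap F L) then ((Fintype.card F : ℚ) - 1) else 0) + 1 := by
    intro y; split_ifs <;> simp
  rw [h2, Finset.sum_congr rfl fun y _ => (h1 y).trans (h4 y), Finset.sum_add_distrib,
    ← Finset.sum_filter, Finset.sum_const, h3]
  simp [hL]
  ring

lemma TT_rat (hL : Fintype.card L = Fintype.card F ^ 2) (n : ℕ) {u v : F}
    (h : ¬ (u = 0 ∧ v = 0)) : TT F n (algebraMap F L u) (algebraMap F L v) =
      (Fintype.card F : ℚ) ^ (3 * n) * ((Fintype.card F : ℚ) ^ 2 - Fintype.card F) := by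
  have h3 : (Fintype.card F : ℚ) ≠ 0 := by have := one_lt_q (F := F); linarith
  have key : ∀ (m : ℕ) (f : F → ℚ), ∑ p ∈ BP F m, f (evf m u v p) =
      (Fintype.card F : ℚ) ^ m * ∑ c, f c := by
    intro m f
    have := sum_BP_hom m (AddMonoidHom.mk' (fun p : F[X] => evf m u v p) (evf_add m u v))
      (evf_surj m h) f
    simp only [AddMonoidHom.mk'_apply] at this
    apply mul_left_cancel₀ h3
    rw [this]; ring
  rw [TT, VP, Finset.sum_product, ← GG_base hL]
  simp only [eps, evf_alg]
  rw [Finset.sum_congr rfl fun Q _ =>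
    key (2 * n) (fun c => GG (algebraMap F L (evf n u v Q)) (algebraMap F L c)), ← Finset.mul_sum]
  rw [key n (fun a => ∑ b : F, GG (algebraMap F L a) (algebraMap F L b))]
  ring

omit [Fintype L] in
lemma NN_rat (d : ℕ) {u v : F} (h : ¬ (u = 0 ∧ v = 0)) :
    NN F d (algebraMap F L u) (algebraMap F L v) =
      (Fintype.card F : ℚ) ^ d * ((Fintype.card F : ℚ) - 1) := by
  have h3 : (Fintype.card F : ℚ) ≠ 0 := by have := one_lt_q (F := F); linarith
  have := sum_BP_hom d (AddMonoidHom.mk' (fun p : F[X] => evf d u v p) (evf_add d u v))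
      (evf_surj d h) (fun c => if c ≠ 0 then 1 else 0)
  simp only [AddMonoidHom.mk'_apply] at this
  apply mul_left_cancel₀ h3
  rw [NN]
  simp only [evf_alg, ne_eq, map_eq_zero] at this ⊢
  rw [this, Finset.sum_boole, Finset.filter_ne', Finset.card_erase_of_mem (Finset.mem_univ _),
    Finset.card_univ, Nat.cast_sub Fintype.card_pos]
  push_cast; ring

lemma SS_rat (hL : Fintype.card L = Fintype.card F ^ 2) (n : ℕ) {u v : F}
    (h : ¬ (u = 0 ∧ v = 0)) : SS F (n + 1) (algebraMap F L u) (algebraMap F L v) =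
      (Fintype.card F : ℚ) ^ (3 * (n + 1)) * ((Fintype.card F : ℚ) - 1) ^ 2 := by
  have h1 := one_lt_q (F := F)
  have h2 : (Fintype.card F : ℚ) - 1 ≠ 0 := by linarith
  have e1 := TT_eq (F := F) (n + 1) (algebraMap F L u) (algebraMap F L v)
  have e0 := TT_eq (F := F) n (algebraMap F L u) (algebraMap F L v)
  rw [Finset.sum_range_succ'] at e1
  have : ∑ k ∈ Finset.range (n + 1), (Fintype.card F : ℚ) ^ (k + 1) *
      (NN F (k + 1) (algebraMap F L u) (algebraMap F L v) / ((Fintype.card F : ℚ) - 1)) *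
        SS F (n + 1 - (k + 1)) (algebraMap F L u) (algebraMap F L v) =
      (Fintype.card F : ℚ) ^ 2 * TT F n (algebraMap F L u) (algebraMap F L v) := by
    rw [e0, Finset.mul_sum]
    refine Finset.sum_congr rfl fun k hk => ?_
    rw [NN_rat _ h, NN_rat _ h, Nat.add_sub_add_right]
    ring
  rw [this, NN_rat _ h, TT_rat hL _ h, TT_rat hL _ h] at e1
  simp only [pow_zero, one_mul, div_self h2, Nat.sub_zero] at e1
  rw [eq_comm, ← eq_sub_iff_add_eq'] at e1
  rw [e1]; ring

omit [Fintype F] [Fintype L] in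
lemma evf_quad_surj {x : L} (hs : Function.Surjective
    (fun st : F × F => algebraMap F L st.1 + algebraMap F L st.2 * x)) {n : ℕ} (hn : 1 ≤ n)
    (c : L) : ∃ p : F[X], p.natDegree ≤ n ∧ evf n x 1 p = c := by
  obtain ⟨⟨s, t⟩, h⟩ := hs c
  have hd : (C t * X + C s).natDegree ≤ n := (natDegree_lin_le t s).trans hn
  refine ⟨C t * X + C s, hd, ?_⟩
  rw [evf_one_right x hd, ← h]
  simp [add_comm]

lemma TT_quad (hL : Fintype.card L = Fintype.card F ^ 2) {x : L}
    (hx : x ∉ Set.range (algebraMap F L)) (n : ℕ) : TT F (n + 1) x 1 = 0 := by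
  have h3 : (Fintype.card L : ℚ) ≠ 0 := by exact_mod_cast Fintype.card_ne_zero
  rw [TT, VP, Finset.sum_product]
  refine Finset.sum_eq_zero fun Q _ => ?_
  have := sum_BP_hom (2 * (n + 1))
    (AddMonoidHom.mk' (fun p : F[X] => evf (2 * (n + 1)) x 1 p) (evf_add (2 * (n + 1)) x 1))
      (evf_quad_surj (quad_bij hL hx).2 (by omega)) (fun b => GG (evf (n + 1) x 1 Q) b)
  rw [GG_sum, mul_zero] at this
  exact (mul_eq_zero.1 this).resolve_left h3

lemma BP_zero_sum (f : F[X] → ℚ) : ∑ p ∈ BP F 0, f p = ∑ a : F, f (C a) := by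
  have : BP F 0 = Finset.univ.image (C : F → F[X]) := by
    ext p
    simp only [mem_BP, Nat.le_zero, natDegree_eq_zero, Finset.mem_image, Finset.mem_univ, true_and]
  rw [this, Finset.sum_image (fun a _ b _ h => C_injective h)]

omit [Fintype F] [Fintype L] in
lemma evf_zero_C (u v : L) (a : F) : evf 0 u v (C a) = algebraMap F L a := by simp [evf]

lemma TT_quad_zero (hL : Fintype.card L = Fintype.card F ^ 2) (u v : L) :
    TT F 0 u v = (Fintype.card F : ℚ) ^ 2 - Fintype.card F := by
  rw [TT, VP, Finset.sum_product, ← GG_base hL, BP_zero_sum]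
  refine Finset.sum_congr rfl fun a _ => ?_
  rw [mul_zero, BP_zero_sum]
  refine Finset.sum_congr rfl fun b _ => ?_
  simp only [eps, mul_zero, evf_zero_C]

omit [Fintype L] in
lemma NN_quad_zero (u v : L) : NN F 0 u v = (Fintype.card F : ℚ) - 1 := by
  rw [NN, BP_zero_sum]
  simp only [evf_zero_C, ne_eq, map_eq_zero]
  rw [Finset.sum_boole, Finset.filter_ne', Finset.card_erase_of_mem (Finset.mem_univ _),
    Finset.card_univ, Nat.cast_sub Fintype.card_pos]
  push_cast; ring

lemma NN_quad (hL : Fintype.card L = Fintype.card F ^ 2) {x : L}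
    (hx : x ∉ Set.range (algebraMap F L)) (d : ℕ) : NN F (d + 1) x 1 =
      (Fintype.card F : ℚ) ^ d * ((Fintype.card F : ℚ) ^ 2 - 1) := by
  have h3 : (Fintype.card F : ℚ) ≠ 0 := by have := one_lt_q (F := F); linarith
  have := sum_BP_hom (d + 1)
    (AddMonoidHom.mk' (fun p : F[X] => evf (d + 1) x 1 p) (evf_add (d + 1) x 1))
      (evf_quad_surj (quad_bij hL hx).2 (by omega)) (fun c => if c ≠ 0 then 1 else 0)
  simp only [AddMonoidHom.mk'_apply] at this
  have h4 : (Fintype.card L : ℚ) = (Fintype.card F : ℚ) ^ 2 := by exact_mod_cast hL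
  rw [h4] at this
  apply mul_left_cancel₀ (pow_ne_zero 2 h3)
  rw [NN, this, Finset.sum_boole, Finset.filter_ne', Finset.card_erase_of_mem (Finset.mem_univ _),
    Finset.card_univ, Nat.cast_sub Fintype.card_pos, h4]
  push_cast; ring

lemma SS_quad (hL : Fintype.card L = Fintype.card F ^ 2) {x : L}
    (hx : x ∉ Set.range (algebraMap F L)) (n : ℕ) : SS F (n + 1) x 1 =
      (-1) ^ (n + 1) * (Fintype.card F : ℚ) ^ (n + 2) * ((Fintype.card F : ℚ) ^ 2 - 1) := by
  set q : ℚ := (Fintype.card F : ℚ) with hq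
  have h1 : 1 < q := one_lt_q (F := F)
  have h2 : q - 1 ≠ 0 := by linarith
  have hS0 : SS F 0 x 1 = q ^ 2 - q := by
    have := TT_eq (F := F) 0 x (1 : L)
    rw [TT_quad_zero hL] at this
    simp only [zero_add, Finset.sum_range_one, pow_zero, one_mul, NN_quad_zero,
      Nat.sub_zero, ← hq, div_self h2] at this
    exact this.symm
  have hK : ∀ k, NN F (k + 1) x 1 / (q - 1) = q ^ k * (q + 1) := by
    intro k; rw [NN_quad hL hx, ← hq]; field_simp; ring
  have e : ∀ n, TT F (n + 1) x 1 - q ^ 2 * TT F n x 1 = SS F (n + 1) x 1 + q * SS F n x 1 := by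
    intro n
    have e1 := TT_eq (F := F) (n + 1) x (1 : L)
    have e0 := TT_eq (F := F) n x (1 : L)
    rw [Finset.sum_range_succ', Finset.sum_range_succ'] at e1
    rw [Finset.sum_range_succ'] at e0
    simp only [← hq, hK, NN_quad_zero, div_self h2, pow_zero, one_mul, Nat.sub_zero, zero_add,
      Nat.add_sub_add_right, Nat.add_sub_cancel] at e1 e0
    have : ∑ k ∈ Finset.range n, q ^ (k + 1 + 1) * (q ^ (k + 1) * (q + 1)) *
        SS F (n - (k + 1)) x 1 = q ^ 2 * ∑ k ∈ Finset.range n, q ^ (k + 1) * (q ^ k * (q + 1)) *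
        SS F (n - (k + 1)) x 1 := by
      rw [Finset.mul_sum]
      exact Finset.sum_congr rfl fun k _ => by ring
    rw [this] at e1
    rw [e1, e0]; ring
  induction n with
  | zero =>
    have := e 0
    rw [TT_quad hL hx, TT_quad_zero hL, ← hq, hS0] at this
    linear_combination -this
  | succ n ih =>
    have := e (n + 1)
    rw [TT_quad hL hx, TT_quad hL hx, ih] at this
    linear_combination -this

end points
end HC

namespace HC

section trace
open Classical
variable {L : Type*} [Field L] [Fintype L] {F : Type*} [Field F] [Fintype F] [Algebra F L]

/-- Total excess over the projective line. -/
def pe (n : ℕ) (L : Type*) [Field L] [Fintype L] [Algebra F L] (w : F[X] × F[X]) : ℚ :=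
  ∑ x : L, eps n x 1 w + eps n (1 : L) 0 w

omit [Fintype F] in
lemma nPoints_eq (g : ℕ) {w : F[X] × F[X]} (hw : InV (g + 1) w) :
    (nPoints g L w.1 w.2 : ℚ) = Fintype.card L + 1 + pe (g + 1) L w := by
  have h1 : Nat.card {xy : L × L // xy.2 ^ 2 + aeval xy.1 w.1 * xy.2 = aeval xy.1 w.2} =
      ∑ x : L, (Finset.univ.filter
        (fun y : L => y ^ 2 + aeval x w.1 * y = aeval x w.2)).card := by
    rw [Nat.card_eq_fintype_card, Fintype.card_subtype, Finset.card_filter, ← Finset.univ_product_univ,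
      Finset.sum_product]
    refine Finset.sum_congr rfl fun x _ => ?_
    rw [Finset.card_filter]
  have h2 : Nat.card {y : L // y ^ 2 + algebraMap F L (w.1.coeff (g + 1)) * y =
      algebraMap F L (w.2.coeff (2 * g + 2))} = (Finset.univ.filter (fun y : L =>
        y ^ 2 + algebraMap F L (w.1.coeff (g + 1)) * y =
          algebraMap F L (w.2.coeff (2 * g + 2)))).card := by
    rw [Nat.card_eq_fintype_card, Fintype.card_subtype]
  rw [nPoints, h1, h2, pe]
  simp only [eps, GG, evf_infty, evf_one_right _ hw.1, evf_one_right _ hw.2,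
    Finset.sum_sub_distrib]
  push_cast
  simp only [Finset.sum_const, Finset.card_univ, nsmul_eq_mul, mul_one]
  rw [show 2 * (g + 1) = 2 * g + 2 by ring]
  ring

lemma sum_pe (hL : Fintype.card L = Fintype.card F ^ 2) (n : ℕ) :
    ∑ w ∈ SmF F (n + 1), pe (n + 1) L w =
      ((Fintype.card F : ℚ) + 1) * ((Fintype.card F : ℚ) ^ (3 * (n + 1)) *
        ((Fintype.card F : ℚ) - 1) ^ 2) +
      ((Fintype.card F : ℚ) ^ 2 - Fintype.card F) *
      ((-1) ^ (n + 1) * (Fintype.card F : ℚ) ^ (n + 2) * ((Fintype.card F : ℚ) ^ 2 - 1)) := by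
  unfold pe
  rw [Finset.sum_add_distrib, Finset.sum_comm]
  have h1 : ∀ x : L, ∑ w ∈ SmF F (n + 1), eps (n + 1) x 1 w =
      if x ∈ Set.range (algebraMap F L) then (Fintype.card F : ℚ) ^ (3 * (n + 1)) *
        ((Fintype.card F : ℚ) - 1) ^ 2 else
      (-1) ^ (n + 1) * (Fintype.card F : ℚ) ^ (n + 2) * ((Fintype.card F : ℚ) ^ 2 - 1) := by
    intro x
    split_ifs with hx
    · obtain ⟨z, rfl⟩ := hx
      have := SS_rat hL n (u := z) (v := 1) (by simp)
      rw [map_one] at this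
      exact this
    · exact SS_quad hL hx n
  have h2 : ∑ w ∈ SmF F (n + 1), eps (n + 1) (1 : L) 0 w = (Fintype.card F : ℚ) ^ (3 * (n + 1)) *
        ((Fintype.card F : ℚ) - 1) ^ 2 := by
    have := SS_rat hL n (u := 1) (v := 0) (by simp)
    rw [map_one, map_zero] at this
    exact this
  have h3 : (Finset.univ.filter (fun y : L => y ∈ Set.range (algebraMap F L))).card =
      Fintype.card F := by
    rw [← Finset.card_univ (α := F), ← Finset.card_image_of_injective Finset.univ
      (algebraMap F L).injective]
    congr 1
    ext y; simp
  have h4 : ((Finset.univ.filter (fun y : L => ¬ y ∈ Set.range (algebraMap F L))).card : ℚ) =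
      (Fintype.card F : ℚ) ^ 2 - Fintype.card F := by
    have := Finset.card_filter_add_card_filter_not (s := (Finset.univ : Finset L))
      (fun y : L => y ∈ Set.range (algebraMap F L))
    rw [h3, Finset.card_univ, hL] at this
    rw [eq_sub_iff_add_eq']
    exact_mod_cast this
  rw [h2, Finset.sum_congr rfl fun x _ => h1 x, Finset.sum_ite, Finset.sum_const, Finset.sum_const,
    h3, nsmul_eq_mul, nsmul_eq_mul, h4]
  ring

omit [Fintype F] in
lemma eps_smul (n : ℕ) {c : L} (hc : c ≠ 0) (u v : L) (w : F[X] × F[X]) :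
    eps n (c * u) (c * v) w = eps n u v w := by
  unfold eps
  rw [evf_smul_pt, evf_smul_pt, mul_comm 2 n, pow_mul, GG_scale _ _ (pow_ne_zero n hc)]

omit [Fintype F] in
lemma eps_zero {n : ℕ} (hn : 1 ≤ n) (w : F[X] × F[X]) : eps n (0 : L) 0 w = 0 := by
  unfold eps
  have h : ∀ m, 1 ≤ m → ∀ p : F[X], evf m (0 : L) 0 p = 0 := by
    intro m hm p
    have := evf_smul_pt m (0 : L) 0 0 p
    rw [zero_pow (by omega)] at this
    simpa using this
  rw [h n hn, h (2 * n) (by omega), GG_zero]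

omit [Fintype F] in
lemma pe_eq {n : ℕ} (hn : 1 ≤ n) (w : F[X] × F[X]) :
    ∑ p : L × L, eps n p.1 p.2 w = ((Fintype.card L : ℚ) - 1) * pe n L w := by
  rw [Fintype.sum_prod_type_right]
  have h1 : ∀ v : L, v ≠ 0 → ∑ u : L, eps n u v w = ∑ x : L, eps n x 1 w := by
    intro v hv
    refine (Fintype.sum_equiv (Equiv.mulLeft₀ v hv) _ _ fun x => ?_).symm
    rw [← eps_smul n hv x 1 w]; simp
  have h2 : ∑ u : L, eps n u 0 w = ((Fintype.card L : ℚ) - 1) * eps n (1 : L) 0 w := by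
    rw [← Finset.sum_erase Finset.univ (a := (0 : L)) (eps_zero hn w),
      Finset.sum_congr rfl (g := fun _ => eps n (1 : L) 0 w)]
    · rw [Finset.sum_const, Finset.card_erase_of_mem (Finset.mem_univ _), nsmul_eq_mul,
        Finset.card_univ, Nat.cast_sub Fintype.card_pos, Nat.cast_one]
    · intro u hu
      rw [← eps_smul n (Finset.ne_of_mem_erase hu) 1 0 w]; simp
  rw [← Finset.add_sum_erase Finset.univ _ (Finset.mem_univ (0 : L)), h2,
    Finset.sum_congr rfl fun v hv => h1 v (Finset.ne_of_mem_erase hv),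
    Finset.sum_const, Finset.card_erase_of_mem (Finset.mem_univ _), nsmul_eq_mul,
    Finset.card_univ, Nat.cast_sub Fintype.card_pos, Nat.cast_one, pe]
  ring

omit [Fintype F] [Fintype L] in
lemma lin_inj (A : Matrix.GeneralLinearGroup (Fin 2) F) : Function.Injective (fun p : L × L =>
    (algebraMap F L (A.1 0 0) * p.1 + algebraMap F L (A.1 0 1) * p.2,
      algebraMap F L (A.1 1 0) * p.1 + algebraMap F L (A.1 1 1) * p.2)) := by
  have h : (A⁻¹).1 * A.1 = 1 := by
    rw [← Units.val_mul, inv_mul_cancel]; rfl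
  have e : ∀ i j, algebraMap F L ((A⁻¹).1 i 0) * algebraMap F L (A.1 0 j) +
      algebraMap F L ((A⁻¹).1 i 1) * algebraMap F L (A.1 1 j) =
      algebraMap F L ((1 : Matrix (Fin 2) (Fin 2) F) i j) := by
    intro i j
    rw [← h, Matrix.mul_apply, Fin.sum_univ_two]; simp
  have e00 := e 0 0
  have e01 := e 0 1
  have e10 := e 1 0
  have e11 := e 1 1
  simp only [Matrix.one_apply, Fin.isValue, one_ne_zero, zero_ne_one, if_true, if_false, map_one,
    map_zero] at e00 e01 e10 e11
  refine Function.LeftInverse.injective (g := fun p : L × L =>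
    (algebraMap F L ((A⁻¹).1 0 0) * p.1 + algebraMap F L ((A⁻¹).1 0 1) * p.2,
      algebraMap F L ((A⁻¹).1 1 0) * p.1 + algebraMap F L ((A⁻¹).1 1 1) * p.2)) ?_
  rintro ⟨u, v⟩
  ext1
  · simp only
    linear_combination u * e00 + v * e01
  · simp only
    linear_combination u * e10 + v * e11

omit [Fintype F] in
lemma pe_psi {n : ℕ} (hn : 1 ≤ n) (w : F[X] × F[X]) (A : Matrix.GeneralLinearGroup (Fin 2) F) :
    pe n L (fm (fun n => psiF n (A : Matrix (Fin 2) (Fin 2) F)) n w) = pe n L w := by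
  have h1 : (1 : ℚ) < Fintype.card L := one_lt_q
  have h2 : (Fintype.card L : ℚ) - 1 ≠ 0 := by linarith
  apply mul_left_cancel₀ h2
  rw [← pe_eq hn, ← pe_eq hn, ← (Finite.injective_iff_bijective.1 (lin_inj (L := L) A)).sum_comp
    (fun p : L × L => eps n p.1 p.2 w)]
  refine Finset.sum_congr rfl fun p _ => ?_
  simp only [eps, fm, evf_psiF]

omit [Fintype F] in
lemma pe_tr {n : ℕ} {w : F[X] × F[X]} (hw : InV n w) {r : F[X]}
    (hr : r.natDegree ≤ n) : pe n L (tr r w) = pe n L w := by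
  simp only [pe, eps_tr _ _ hw hr]

omit [Fintype F] in
lemma pe_sc {n : ℕ} {w : F[X] × F[X]} (hw : InV n w) {c : F} (hc : c ≠ 0) :
    pe n L (sc (C c) w) = pe n L w := by
  have : ∀ u v : L, eps n u v (sc (C c) w) = eps n u v w := by
    intro u v
    rw [eps_sc (Nat.zero_le n) u v (by simpa using hw) (natDegree_C c).le, evf_zero_C, if_pos]
    · rfl
    · simpa using hc
  simp only [pe, this]

end trace
end HC

namespace HC

section orbits
open Classical
variable {F : Type*} [Field F]

/-- The action of a matrix on pairs of forms. -/
abbrev fa (A : Matrix.GeneralLinearGroup (Fin 2) F) (n : ℕ) (w : F[X] × F[X]) : F[X] × F[X] :=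
  fm (fun n => psiF n (A : Matrix (Fin 2) (Fin 2) F)) n w

lemma isoTriple_iff (g : ℕ) (A : Matrix.GeneralLinearGroup (Fin 2) F) (e : F) (r : F[X])
    (w₁ w₂ : F[X] × F[X]) :
    IsoTriple g (A : Matrix (Fin 2) (Fin 2) F) e r w₁.1 w₁.2 w₂.1 w₂.2 ↔
      e ≠ 0 ∧ r.natDegree ≤ g + 1 ∧ sc (C e) w₁ = tr r (fa A (g + 1) w₂) := by
  unfold IsoTriple
  refine and_congr_right fun _ => and_congr_right fun _ => ?_
  rw [Prod.ext_iff]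
  simp only [sc, tr, fm, C_pow, mul_add, mul_one]
  rw [add_comm (2 * r)]

lemma fa_sc {n : ℕ} (A : Matrix.GeneralLinearGroup (Fin 2) F) {w : F[X] × F[X]} (hw : InV n w)
    (c : F) : fa A n (sc (C c) w) = sc (C c) (fa A n w) := by
  have := fm_sc (formMap_psi A) (Nat.zero_le n) (v := w) (by simpa using hw) (natDegree_C c).le
  simp only [Nat.sub_zero] at this
  refine this.trans ?_
  congr 1
  simp [psiF]

lemma fa_fa (n : ℕ) (A B : Matrix.GeneralLinearGroup (Fin 2) F) (w : F[X] × F[X]) :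
    fa A n (fa B n w) = fa (B * A) n w := by
  simp [fa, fm, psiF_psiF]

lemma fa_tr {n : ℕ} (A : Matrix.GeneralLinearGroup (Fin 2) F) {w : F[X] × F[X]} (hw : InV n w)
    {r : F[X]} (hr : r.natDegree ≤ n) : fa A n (tr r w) =
      tr (psiF n (A : Matrix (Fin 2) (Fin 2) F) r) (fa A n w) :=
  fm_tr (formMap_psi A) hw hr

lemma iso_comp {n : ℕ} {A B : Matrix.GeneralLinearGroup (Fin 2) F} {e f : F} {r s : F[X]}
    {w₁ w₂ w₃ : F[X] × F[X]} (hw₂ : InV n w₂) (hw₃ : InV n w₃) (hs : s.natDegree ≤ n)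
    (h₁ : sc (C e) w₁ = tr r (fa A n w₂)) (h₂ : sc (C f) w₂ = tr s (fa B n w₃)) :
    sc (C (f * e)) w₁ =
      tr (C f * r + psiF n (A : Matrix (Fin 2) (Fin 2) F) s) (fa (B * A) n w₃) := by
  rw [C_mul, ← sc_sc, h₁, sc_tr, ← fa_sc A hw₂, h₂,
    fa_tr A (hw₃.fm (formMap_psi B)) hs, tr_tr, fa_fa]

lemma iso_symm {n : ℕ} {A : Matrix.GeneralLinearGroup (Fin 2) F} {e : F} (he : e ≠ 0) {r : F[X]}
    {w₁ w₂ : F[X] × F[X]} (hw₁ : InV n w₁) (hw₂ : InV n w₂) (hr : r.natDegree ≤ n)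
    (h : sc (C e) w₁ = tr r (fa A n w₂)) :
    sc (C e⁻¹) w₂ = tr (C e⁻¹ * psiF n ((A⁻¹ : Matrix.GeneralLinearGroup (Fin 2) F) :
      Matrix (Fin 2) (Fin 2) F) (-r)) (fa A⁻¹ n w₁) := by
  have h1 : fa A n w₂ = tr (-r) (sc (C e) w₁) := by
    rw [h, tr_tr, neg_add_cancel, tr_zero]
  have h2 := fm_psi_psi hw₂ A
  rw [← h2]
  change sc _ (fa A⁻¹ n (fa A n w₂)) = _
  rw [h1, fa_tr A⁻¹ (hw₁.scC e) (by simpa using hr), sc_tr, fa_sc A⁻¹ hw₁, sc_sc,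
    ← C_mul, inv_mul_cancel₀ he, C_1, sc_one]

variable [Fintype F]

lemma hsm {g : ℕ} (c : HypEq F g) : Sm (g + 1) c.1 := (isHypModel_iff g _ _).1 c.2

/-- The triples from one equation to another. -/
def TS (g : ℕ) (c₁ c₂ : HypEq F g) : Set (Matrix.GeneralLinearGroup (Fin 2) F × F × F[X]) :=
  {t | IsoTriple g (t.1 : Matrix (Fin 2) (Fin 2) F) t.2.1 t.2.2 c₁.1.1 c₁.1.2 c₂.1.1 c₂.1.2}

omit [Fintype F] in
lemma mem_TS {g : ℕ} {c₁ c₂ : HypEq F g} {t : Matrix.GeneralLinearGroup (Fin 2) F × F × F[X]} :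
    t ∈ TS g c₁ c₂ ↔ t.2.1 ≠ 0 ∧ t.2.2.natDegree ≤ g + 1 ∧
      sc (C t.2.1) c₁.1 = tr t.2.2 (fa t.1 (g + 1) c₂.1) := isoTriple_iff g _ _ _ _ _

/-- All admissible triples. -/
def TA (F : Type*) [Field F] [Fintype F] (g : ℕ) :
    Finset (Matrix.GeneralLinearGroup (Fin 2) F × F × F[X]) :=
  Finset.univ ×ˢ (Finset.univ.erase 0) ×ˢ BP F (g + 1)

lemma mem_TA {g : ℕ} {t : Matrix.GeneralLinearGroup (Fin 2) F × F × F[X]} :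
    t ∈ TA F g ↔ t.2.1 ≠ 0 ∧ t.2.2.natDegree ≤ g + 1 := by
  simp [TA, mem_BP]

lemma TS_sub {g : ℕ} (c₁ c₂ : HypEq F g) : TS g c₁ c₂ ⊆ TA F g := fun t ht => by
  rw [mem_TS] at ht
  exact mem_TA.2 ⟨ht.1, ht.2.1⟩

lemma TS_finite {g : ℕ} (c₁ c₂ : HypEq F g) : (TS g c₁ c₂).Finite :=
  (TA F g).finite_toSet.subset (TS_sub c₁ c₂)

omit [Fintype F] in
lemma isomRel_iff {g : ℕ} {c₁ c₂ : HypEq F g} : IsomRel g c₁ c₂ ↔ (TS g c₁ c₂).Nonempty :=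
  ⟨fun ⟨A, e, r, h⟩ => ⟨(A, e, r), h⟩, fun ⟨t, h⟩ => ⟨t.1, t.2.1, t.2.2, h⟩⟩

lemma isomRel_refl {g : ℕ} (c : HypEq F g) : IsomRel g c c := by
  rw [isomRel_iff]
  refine ⟨(1, 1, 0), mem_TS.2 ⟨one_ne_zero, by simp, ?_⟩⟩
  have h := (hsm c).1
  simp only [C_1, sc_one, tr_zero]
  ext1
  · simp only [fm, Units.val_one]
    exact (psiF_one h.1).symm
  · simp only [fm, Units.val_one]
    exact (psiF_one h.2).symm

lemma isomRel_symm {g : ℕ} {c₁ c₂ : HypEq F g} (h : IsomRel g c₁ c₂) : IsomRel g c₂ c₁ := by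
  rw [isomRel_iff] at h ⊢
  obtain ⟨⟨A, e, r⟩, h⟩ := h
  rw [mem_TS] at h
  exact ⟨(A⁻¹, e⁻¹, _), mem_TS.2 ⟨inv_ne_zero h.1, natDegree_C_mul_le' _ (natDegree_psiF_le _ _ _),
    iso_symm h.1 (hsm c₁).1 (hsm c₂).1 h.2.1 h.2.2⟩⟩

lemma comp_mem {g : ℕ} {c₁ c₂ c₃ : HypEq F g} {A B : Matrix.GeneralLinearGroup (Fin 2) F}
    {e f : F} {r s : F[X]} (h₁ : (A, e, r) ∈ TS g c₁ c₂) (h₂ : (B, f, s) ∈ TS g c₂ c₃) :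
    (B * A, f * e, C f * r + psiF (g + 1) (A : Matrix (Fin 2) (Fin 2) F) s) ∈ TS g c₁ c₃ := by
  rw [mem_TS] at h₁ h₂ ⊢
  exact ⟨mul_ne_zero h₂.1 h₁.1, natDegree_add_le_of_degree_le (natDegree_C_mul_le' _ h₁.2.1)
    (natDegree_psiF_le _ _ _), iso_comp (hsm c₂).1 (hsm c₃).1 h₂.2.1 h₁.2.2 h₂.2.2⟩

lemma isomRel_trans {g : ℕ} {c₁ c₂ c₃ : HypEq F g} (h : IsomRel g c₁ c₂) (h' : IsomRel g c₂ c₃) :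
    IsomRel g c₁ c₃ := by
  rw [isomRel_iff] at h h' ⊢
  obtain ⟨⟨A, e, r⟩, h⟩ := h
  obtain ⟨⟨B, f, s⟩, h'⟩ := h'
  exact ⟨_, comp_mem h h'⟩

lemma isomRel_equiv (g : ℕ) : Equivalence (IsomRel (F := F) g) :=
  ⟨isomRel_refl, isomRel_symm, isomRel_trans⟩

omit [Fintype F] in
lemma psi_inj {n : ℕ} (A : Matrix.GeneralLinearGroup (Fin 2) F) {s s' : F[X]}
    (hs : s.natDegree ≤ n) (hs' : s'.natDegree ≤ n)
    (h : psiF n (A : Matrix (Fin 2) (Fin 2) F) s = psiF n (A : Matrix (Fin 2) (Fin 2) F) s') :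
    s = s' := by
  by_contra hne
  refine psiF_ne_zero (n := n) A (natDegree_sub_le_of_le hs hs' |>.trans (by simp)) (sub_ne_zero.2 hne) ?_
  have := (formMap_psi A).sub n s s'
  exact this.trans (sub_eq_zero.2 h)

lemma TS_le {g : ℕ} {c₁ c₂ : HypEq F g} (h : IsomRel g c₁ c₂) (c₃ : HypEq F g) :
    (TS g c₂ c₃).ncard ≤ (TS g c₁ c₃).ncard := by
  obtain ⟨⟨A, e, r⟩, h⟩ := isomRel_iff.1 h
  refine Set.ncard_le_ncard_of_injOn
    (fun t => (t.1 * A, t.2.1 * e, C t.2.1 * r + psiF (g + 1) (A : Matrix (Fin 2) (Fin 2) F) t.2.2))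
    (fun t ht => comp_mem h ht) ?_ (TS_finite _ _)
  rintro ⟨B, f, s⟩ ht ⟨B', f', s'⟩ ht' heq
  have he := (mem_TS.1 h).1
  simp only [Prod.mk.injEq] at heq he
  obtain ⟨h1, h2, h3⟩ := heq
  have h1 := mul_right_cancel h1
  have h2 := mul_right_cancel₀ he h2
  subst h1 h2
  have h3 := psi_inj A (mem_TS.1 ht).2.1 (mem_TS.1 ht').2.1 (add_left_cancel h3)
  simp only at h3
  rw [h3]

lemma TS_eq {g : ℕ} {c₁ c₂ : HypEq F g} (h : IsomRel g c₁ c₂) (c₃ : HypEq F g) :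
    (TS g c₁ c₃).ncard = (TS g c₂ c₃).ncard :=
  le_antisymm (TS_le (isomRel_symm h) c₃) (TS_le h c₃)

instance hypEq_finite (g : ℕ) : Finite (HypEq F g) := by
  refine Finite.of_injective (β := SmF F (g + 1)) (fun c => ⟨c.1, mem_SmF.2 (hsm c)⟩) ?_
  intro c c' h
  exact Subtype.ext (congrArg (fun x : SmF F (g + 1) => x.1) h)

lemma card_TA (g : ℕ) : ((TA F g).card : ℚ) =
    ((Fintype.card F : ℚ) ^ 2 - 1) * ((Fintype.card F : ℚ) ^ 2 - Fintype.card F) *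
      (((Fintype.card F : ℚ) - 1) * (Fintype.card F : ℚ) ^ (g + 2)) := by
  have h1 : 1 < Fintype.card F := Fintype.one_lt_card
  have h2 : Fintype.card F ≤ Fintype.card F ^ 2 := by nlinarith
  have hG := Matrix.card_GL_field (𝔽 := F) 2
  rw [Nat.card_eq_fintype_card, Fin.prod_univ_two] at hG
  rw [TA, Finset.card_product, Finset.card_product, Finset.card_univ, card_units_ne, card_BP, hG]
  simp only [Fin.val_zero, Fin.val_one, pow_zero, pow_one]
  push_cast [Nat.cast_sub h2, Nat.cast_sub (h1.le.trans h2), Nat.cast_sub h1.le]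
  ring

lemma sum_TS (g : ℕ) [Fintype (HypEq F g)] (c₂ : HypEq F g) :
    ∑ c₁ : HypEq F g, (TS g c₁ c₂).ncard = (TA F g).card := by
  have hex : ∀ t : Matrix.GeneralLinearGroup (Fin 2) F × F × F[X], t ∈ TA F g →
      ∃ c₁ : HypEq F g, t ∈ TS g c₁ c₂ := by
    rintro ⟨A, e, r⟩ ht
    rw [mem_TA] at ht
    refine ⟨⟨sc (C e⁻¹) (tr r (fa A (g + 1) c₂.1)), (isHypModel_iff g _ _).2
      ((((hsm c₂).psi A).tr ht.2).sc (inv_ne_zero ht.1))⟩, mem_TS.2 ⟨ht.1, ht.2, ?_⟩⟩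
    simp only
    rw [sc_sc, ← C_mul, mul_inv_cancel₀ ht.1, C_1, sc_one]
  have huniq : ∀ c₁ c₁' t, t ∈ TS g c₁ c₂ → t ∈ TS g c₁' c₂ → c₁ = c₁' := by
    intro c₁ c₁' t h h'
    rw [mem_TS] at h h'
    exact Subtype.ext (sc_inj (C_ne_zero.2 h.1) (h.2.2.trans h'.2.2.symm))
  have : TA F g = Finset.univ.biUnion (fun c₁ => (TS_finite c₁ c₂).toFinset) := by
    ext t
    simp only [Finset.mem_biUnion, Finset.mem_univ, true_and, Set.Finite.mem_toFinset]
    exact ⟨hex t, fun ⟨c₁, h⟩ => TS_sub _ _ h⟩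
  rw [this, Finset.card_biUnion]
  · exact Finset.sum_congr rfl fun c₁ _ => Set.ncard_eq_toFinset_card _ _
  · intro c₁ _ c₁' _ hne
    change Disjoint _ _
    rw [Finset.disjoint_left]
    intro t h h'
    rw [Set.Finite.mem_toFinset] at h h'
    exact hne (huniq _ _ t h h')

lemma class_card (g : ℕ) [Fintype (HypEq F g)] (c₂ : HypEq F g) :
    (Finset.univ.filter (fun c₁ : HypEq F g => IsomRel g c₁ c₂)).card * Nat.card (AutTriples g c₂)
      = (TA F g).card := by
  have h0 : Nat.card (AutTriples g c₂) = (TS g c₂ c₂).ncard := rfl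
  rw [← sum_TS g c₂, h0, Finset.card_filter, Finset.sum_mul]
  refine Finset.sum_congr rfl fun c₁ _ => ?_
  split_ifs with h
  · rw [one_mul, TS_eq h]
  · rw [isomRel_iff, Set.not_nonempty_iff_eq_empty] at h
    rw [h]; simp

/-- The class of an equation. -/
def cls (g : ℕ) (c : HypEq F g) : HypClass F g := Quot.mk _ c

theorem orbit_sum (g : ℕ) (h : HypEq F g → ℚ) (hh : ∀ c c', IsomRel g c c' → h c = h c') :
    ∑ᶠ c : HypClass F g,
      ((Fintype.card F : ℚ) - 1) / (Nat.card (AutTriples g (Quot.out c)) : ℚ) * h (Quot.out c) =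
    ((Fintype.card F : ℚ) - 1) / ((TA F g).card : ℚ) * ∑ᶠ c : HypEq F g, h c := by
  have : Fintype (HypEq F g) := Fintype.ofFinite _
  have : Finite (HypClass F g) := Finite.of_surjective (Quot.mk _) Quot.mk_surjective
  have : Fintype (HypClass F g) := Fintype.ofFinite _
  rw [finsum_eq_sum_of_fintype, finsum_eq_sum_of_fintype,
    ← Finset.sum_fiberwise (κ := HypClass F g) Finset.univ
      (cls g),
    Finset.mul_sum]
  refine Finset.sum_congr rfl fun c _ => ?_
  have hrel : ∀ c' : HypEq F g, cls g c' = c ↔ IsomRel g c' (Quot.out c) := by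
    intro c'
    have := (isomRel_equiv (F := F) g).quot_mk_eq_iff c' (Quot.out c)
    have h' : cls g (Quot.out c) = c := Quot.out_eq c
    conv_lhs => rw [← h']
    exact this
  have h1 : ∑ c' ∈ Finset.univ.filter (fun c' : HypEq F g => cls g c' = c), h c'
      = ((Finset.univ.filter (fun c₁ : HypEq F g => IsomRel g c₁ (Quot.out c))).card : ℚ) *
        h (Quot.out c) := by
    rw [Finset.filter_congr fun c' _ => hrel c', ← nsmul_eq_mul, ← Finset.sum_const]
    refine Finset.sum_congr rfl fun c' hc' => hh _ _ (Finset.mem_filter.1 hc').2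
  have h2 := class_card g (Quot.out c)
  rw [h1, ← h2]
  have h3 : (TA F g).card ≠ 0 := by
    have : ((1, 1, 0) : Matrix.GeneralLinearGroup (Fin 2) F × F × F[X]) ∈ TA F g := by
      simp [mem_TA]
    exact Finset.card_ne_zero_of_mem this
  rw [← h2] at h3
  have h4 := left_ne_zero_of_mul h3
  have h5 := right_ne_zero_of_mul h3
  push_cast
  have h4' : ((Finset.univ.filter (fun c₁ : HypEq F g => IsomRel g c₁ (Quot.out c))).card : ℚ) ≠ 0 :=
    by exact_mod_cast h4
  have h5' : (Nat.card (AutTriples g (Quot.out c)) : ℚ) ≠ 0 := by exact_mod_cast h5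
  field_simp

variable {L : Type*} [Field L] [Fintype L] [Algebra F L]

lemma pe_iso {g : ℕ} {c₁ c₂ : HypEq F g} (h : IsomRel g c₁ c₂) :
    pe (g + 1) L c₁.1 = pe (g + 1) L c₂.1 := by
  obtain ⟨⟨A, e, r⟩, h⟩ := isomRel_iff.1 h
  rw [mem_TS] at h
  obtain ⟨he, hr, h⟩ := h
  rw [← pe_sc (hsm c₁).1 he, h, pe_tr ((hsm c₂).psi A).1 hr, pe_psi (by omega)]

theorem main (hL : Fintype.card L = Fintype.card F ^ 2) (g : ℕ) :
    ∑ᶠ c : HypClass F g,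
      ((Fintype.card F : ℚ) - 1) / (Nat.card (AutTriples g (Quot.out c)) : ℚ) *
        (((Fintype.card F : ℚ) ^ 2 + 1) -
          (nPoints g L (Quot.out c).1.1 (Quot.out c).1.2 : ℚ)) =
      (-1) ^ g - (Fintype.card F : ℚ) ^ (2 * g) := by
  have hn : ∀ c : HypEq F g, ((Fintype.card F : ℚ) ^ 2 + 1) -
      (nPoints g L c.1.1 c.1.2 : ℚ) = - pe (g + 1) L c.1 := by
    intro c
    rw [nPoints_eq g (hsm c).1, hL]; push_cast; ring
  have := orbit_sum g (fun c : HypEq F g => - pe (g + 1) L c.1)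
    (fun c c' h => by rw [pe_iso h])
  simp only [hn]
  rw [this]
  have hfin : Fintype (HypEq F g) := Fintype.ofFinite _
  have hsum : ∑ᶠ c : HypEq F g, - pe (g + 1) L c.1 = - ∑ w ∈ SmF F (g + 1), pe (g + 1) L w := by
    rw [finsum_eq_sum_of_fintype, Finset.sum_neg_distrib]
    congr 1
    refine Finset.sum_bij (fun c _ => c.1) (fun c _ => mem_SmF.2 (hsm c))
      (fun c _ c' _ h => Subtype.ext h) (fun w hw => ?_) (fun c _ => rfl)
    exact ⟨⟨w, (isHypModel_iff g _ _).2 (mem_SmF.1 hw)⟩, Finset.mem_univ _, rfl⟩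
  rw [hsum, sum_pe hL, card_TA]
  have h1 := one_lt_q (F := F)
  set q : ℚ := (Fintype.card F : ℚ)
  have h2 : q - 1 ≠ 0 := by linarith
  have h3 : q ≠ 0 := by linarith
  have h4 : q + 1 ≠ 0 := by linarith
  have e1 : q ^ 2 - 1 = (q - 1) * (q + 1) := by ring
  have e2 : q ^ 2 - q = q * (q - 1) := by ring
  rw [e1, e2]
  have e3 : (q + 1) * (q ^ (3 * (g + 1)) * (q - 1) ^ 2) +
      q * (q - 1) * ((-1) ^ (g + 1) * q ^ (g + 2) * ((q - 1) * (q + 1))) =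
      - ((q - 1) * (q + 1) * (q * (q - 1)) * q ^ (g + 2)) * ((-1) ^ g - q ^ (2 * g)) := by
    ring
  rw [e3]
  have h5 : q ^ (g + 2) ≠ 0 := pow_ne_zero _ h3
  field_simp

end orbits
end HC

/-- Bergström's formula, verified for q = 2, g = 5 in the paper: for any
finite field F = F_q and any g ≥ 2, the weighted sum over the F_q-isomorphism classes of
hyperelliptic curves of genus g of a₂(C)/|Aut_{F_q}(C)|, where
a₂(C) = q² + 1 − |C(F_{q²})| and F_{q²} is the quadratic extension of F_q, equals
(−1)^g − q^{2g}; in particular for q = 2 and g = 5 it equals −1025. -/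
theorem stmt_16 (F : Type) [Field F] [Fintype F] (g : ℕ) (hg : 2 ≤ g)
    (F2 : Type) [Field F2] [Algebra F F2] (h2 : Module.finrank F F2 = 2) :
    ∑ᶠ c : HypClass F g,
      ((Fintype.card F : ℚ) - 1) / (Nat.card (AutTriples g (Quot.out c)) : ℚ) *
        (((Fintype.card F : ℚ) ^ 2 + 1) -
          (nPoints g F2 (Quot.out c).1.1 (Quot.out c).1.2 : ℚ)) =
      (-1) ^ g - (Fintype.card F : ℚ) ^ (2 * g) := by
  have : Module.Finite F F2 := Module.finite_of_finrank_eq_succ h2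
  have : Finite F2 := Module.finite_of_finite F
  have : Fintype F2 := Fintype.ofFinite F2
  have hL : Fintype.card F2 = Fintype.card F ^ 2 := by
    rw [Module.card_eq_pow_finrank (K := F) (V := F2), h2]
  exact HC.main hL g

end
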